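/- arXiv:1003.0708 — 4 statements merged into one kernel-verified Lean document; each statement's English description precedes it below -/
import Mathlib

section
/- Let Γ ⊂ PSL(3,ℂ) be a discrete group and let Ω ⊆ ℙ²_ℂ be a maximal open set on which Γ acts properly discontinuously. If LiG(Ω(Γ)) ≤ 2, where Ω(Γ) is the Kulkarni discontinuity region, then LiG(Ω) ≤ 2. -/
/-!
Suppose that the complement of `Ω` contains three lines in general position. Then `Ω` is contained
in the Kulkarni region `Ω(Γ)`. Since `Γ` always acts properly discontinuously on `Ω(Γ)` as soon as
it is nonempty, maximality gives `Ω = Ω(Γ)`, so `LiG (Ω(Γ)) > 2` as well.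

Proper discontinuity alone makes `Ω` disjoint from `L0 Γ` and `L1 Γ` (`disjoint_L0`,
`disjoint_L1`). The three lines are needed for `L2 Γ` (`disjoint_L2`). If `w ∈ Ω` is a cluster point
of `Γ K`, there are `γ → ∞` in `Γ` and `v → w` with `γ⁻¹ v ∈ K`. Represent `γ⁻¹` by a matrix of norm
one and pass to a limit `S ≠ 0` of these matrices. By `limit_apply_ne_zero`, the point `w` does not
lie in the kernel of `S`, because the preimages under `γ⁻¹` of a line avoiding `Ω` would otherwise
enter `Ω`. Hence `γ⁻¹ v` and `γ⁻¹ w` have the same limit `[S w]`, which lies both in `K` and in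
`L1 Γ`. This is impossible for `K` in the complement of `L0 Γ ∪ L1 Γ`.
-/

open scoped LinearAlgebra.Projectivization
open Projectivization Matrix Topology

noncomputable section

abbrev V3 : Type := Fin 3 → ℂ
abbrev SL3 := Matrix.SpecialLinearGroup (Fin 3) ℂ
abbrev PSL3 := SL3 ⧸ Subgroup.center SL3
abbrev P2 := ℙ ℂ V3

instance : TopologicalSpace P2 := instTopologicalSpaceQuotient

/-- The action of `SL(3,ℂ)` on `ℙ²_ℂ`. -/
def smulP2 (A : SL3) : P2 → P2 :=
  Projectivization.map ((Matrix.SpecialLinearGroup.toLin' A : V3 ≃ₗ[ℂ] V3) : V3 →ₗ[ℂ] V3)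
    (Matrix.SpecialLinearGroup.toLin' A).injective

lemma smulP2_mk (A : SL3) (v : V3) (hv : v ≠ 0) :
    smulP2 A (Projectivization.mk ℂ v hv) =
      Projectivization.mk ℂ (Matrix.SpecialLinearGroup.toLin' A v)
        ((Matrix.SpecialLinearGroup.toLin' A).map_ne_zero_iff.mpr hv) := rfl

lemma smulP2_one : smulP2 (1 : SL3) = id := by
  funext x
  induction x using Projectivization.ind with
  | h v hv => simp [smulP2_mk]

lemma smulP2_mul (A B : SL3) : smulP2 (A * B) = smulP2 A ∘ smulP2 B := by
  funext x
  induction x using Projectivization.ind with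
  | h v hv =>
    simp only [smulP2_mk, Function.comp_apply, _root_.map_mul]
    rfl

lemma continuous_smulP2 (A : SL3) : Continuous (smulP2 A) := by
  unfold smulP2 Projectivization.map
  exact Continuous.quotient_map'
    ((((Matrix.SpecialLinearGroup.toLin' A : V3 ≃ₗ[ℂ] V3) :
        V3 →ₗ[ℂ] V3).continuous_of_finiteDimensional.comp
      continuous_subtype_val).subtype_mk _) _
lemma smulP2_center (A : SL3) (hA : A ∈ Subgroup.center SL3) : smulP2 A = id := by
  obtain ⟨r, hr3, hrA⟩ := Matrix.SpecialLinearGroup.mem_center_iff.mp hA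
  have hr0 : r ≠ 0 := by
    intro h
    rw [h] at hr3
    simp at hr3
  funext x
  induction x using Projectivization.ind with
  | h v hv =>
    have hAv : Matrix.SpecialLinearGroup.toLin' A v = r • v := by
      rw [Matrix.SpecialLinearGroup.toLin'_apply]
      have : ((A : Matrix (Fin 3) (Fin 3) ℂ)) = Matrix.scalar (Fin 3) r := by
        rw [← hrA]
      rw [this]
      funext i
      simp [Matrix.toLin'_apply, Matrix.scalar, Matrix.mulVec_diagonal]
  
    simp only [smulP2_mk, id_eq]
    rw [Projectivization.mk_eq_mk_iff]
    exact ⟨Units.mk0 r hr0, by simp [hAv]⟩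

/-- The action of `SL(3,ℂ)` on `ℙ²` as a homomorphism into permutations. -/
def slPerm : SL3 →* Equiv.Perm P2 where
  toFun A :=
    { toFun := smulP2 A
      invFun := smulP2 A⁻¹
      left_inv := fun x => by
        have := (smulP2_mul A⁻¹ A).symm
        simp only [inv_mul_cancel, smulP2_one] at this
        exact congrFun this x
      right_inv := fun x => by
        have := (smulP2_mul A A⁻¹).symm
        simp only [mul_inv_cancel, smulP2_one] at this
        exact congrFun this x }
  map_one' := by
    ext x
    simp [smulP2_one]
  map_mul' A B := by
    ext x
    simp [smulP2_mul]

/-- The action of `PSL(3,ℂ)` on `ℙ²` as a homomorphism into permutations. -/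
def actHom : PSL3 →* Equiv.Perm P2 :=
  QuotientGroup.lift (Subgroup.center SL3) slPerm (by
    intro A hA
    ext x
    simpa [slPerm] using congrFun (smulP2_center A hA) x)

/-- The action of an element of `PSL(3,ℂ)` on `ℙ²`. -/
def pact (g : PSL3) : P2 → P2 := actHom g

instance : MulAction PSL3 P2 where
  smul g x := pact g x
  one_smul x := by
    show pact 1 x = x
    simp [pact]
  mul_smul g h x := by
    show pact (g * h) x = pact g (pact h x)
    simp [pact]

lemma pact_mk (A : SL3) : pact ((QuotientGroup.mk A : PSL3)) = smulP2 A := by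
  funext x
  simp [pact, actHom, slPerm]

lemma continuous_pact (g : PSL3) : Continuous (pact g) := by
  obtain ⟨A, rfl⟩ := QuotientGroup.mk_surjective g
  rw [pact_mk]
  exact continuous_smulP2 A

/-- The action of an element of `PSL(3,ℂ)` on `ℙ²`, as a continuous map. -/
def pactCM (g : PSL3) : C(P2, P2) := ⟨pact g, continuous_pact g⟩
instance : TopologicalSpace SL3 := instTopologicalSpaceSubtype

/-- A complex line in `ℙ²_ℂ`: the set of points whose representing vectors lie in
a fixed 2-dimensional complex linear subspace of `ℂ³`. -/
def IsLine (ℓ : Set P2) : Prop :=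
  ∃ W : Submodule ℂ V3, Module.finrank ℂ W = 2 ∧ ℓ = {p : P2 | p.submodule ≤ W}

/-- The set of complex lines contained in a given subset of `ℙ²_ℂ`. -/
def linesIn (S : Set P2) : Set (Set P2) := {ℓ | IsLine ℓ ∧ ℓ ⊆ S}

/-- A family of lines is in general position if no point lies on three
(pairwise distinct) lines of the family. -/
def InGenPos (L : Set (Set P2)) : Prop :=
  ∀ p : P2, ∀ ℓ₁ ∈ L, ∀ ℓ₂ ∈ L, ∀ ℓ₃ ∈ L,
    p ∈ ℓ₁ → p ∈ ℓ₂ → p ∈ ℓ₃ → ℓ₁ = ℓ₂ ∨ ℓ₁ = ℓ₃ ∨ ℓ₂ = ℓ₃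

/-- The families of complex lines in general position contained in the complement of `Ω`. -/
def genFamilies (Ω : Set P2) : Set (Set (Set P2)) :=
  {L | (∀ ℓ ∈ L, IsLine ℓ ∧ ℓ ⊆ Ωᶜ) ∧ InGenPos L}

/-- `Li Ω` : the number (in `ℕ∞`) of complex lines contained in the complement of `Ω`. -/
def Li (Ω : Set P2) : ℕ∞ := (linesIn Ωᶜ).encard

/-- `LiG Ω` : the maximal number (in `ℕ∞`) of complex lines in general position contained
in the complement of `Ω`. -/
def LiG (Ω : Set P2) : ℕ∞ := ⨆ L ∈ genFamilies Ω, L.encard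

/-- `Γ` acts properly discontinuously on the nonempty open invariant set `Ω`. -/
def ActsPropDiscOn (Γ : Subgroup PSL3) (Ω : Set P2) : Prop :=
  Ω.Nonempty ∧ IsOpen Ω ∧ (∀ γ ∈ Γ, pact γ '' Ω = Ω) ∧
    ∀ K : Set P2, K ⊆ Ω → IsCompact K →
      {γ : PSL3 | γ ∈ Γ ∧ ((pact γ '' K) ∩ K).Nonempty}.Finite

/-- `Ω` is a maximal open set on which `Γ` acts properly discontinuously. -/
def MaxDisc (Γ : Subgroup PSL3) (Ω : Set P2) : Prop :=
  ActsPropDiscOn Γ Ω ∧ ∀ Ω' : Set P2, ActsPropDiscOn Γ Ω' → Ω ⊆ Ω' → Ω' = Ω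

/-- `L0 Γ` : the closure of the set of points with infinite isotropy group. -/
def L0 (Γ : Subgroup PSL3) : Set P2 :=
  closure {z : P2 | {γ : PSL3 | γ ∈ Γ ∧ pact γ z = z}.Infinite}

/-- The cluster points of the orbit `Γ z`. -/
def orbitCluster (Γ : Subgroup PSL3) (z : P2) : Set P2 :=
  {w : P2 | ∀ U ∈ nhds w, {γ : PSL3 | γ ∈ Γ ∧ pact γ z ∈ U}.Infinite}

/-- The cluster points of `Γ K` for a set `K`. -/
def setCluster (Γ : Subgroup PSL3) (K : Set P2) : Set P2 :=
  {w : P2 | ∀ U ∈ nhds w, {γ : PSL3 | γ ∈ Γ ∧ ((pact γ '' K) ∩ U).Nonempty}.Infinite}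

/-- `L1 Γ` : the closure of the set of cluster points of orbits `Γ z`, `z ∉ L0 Γ`. -/
def L1 (Γ : Subgroup PSL3) : Set P2 :=
  closure (⋃ z ∈ (L0 Γ)ᶜ, orbitCluster Γ z)

/-- `L2 Γ` : the closure of the set of cluster points of `Γ K`,
`K` a compact subset of `ℙ²_ℂ ∖ (L0 Γ ∪ L1 Γ)`. -/
def L2 (Γ : Subgroup PSL3) : Set P2 :=
  closure (⋃ K ∈ {K : Set P2 | IsCompact K ∧ K ⊆ (L0 Γ ∪ L1 Γ)ᶜ}, setCluster Γ K)

/-- The Kulkarni limit set `Λ(Γ)`. -/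
def kulkarniLimit (Γ : Subgroup PSL3) : Set P2 := L0 Γ ∪ L1 Γ ∪ L2 Γ

/-- The Kulkarni discontinuity region `Ω(Γ)`. -/
def kulkarniRegion (Γ : Subgroup PSL3) : Set P2 := (kulkarniLimit Γ)ᶜ

/-- `C(Γ)` : the closure of the union of the Kulkarni limit sets of the cyclic
subgroups generated by the elements of `Γ`. -/
def CSet (Γ : Subgroup PSL3) : Set P2 :=
  closure (⋃ γ ∈ Γ, kulkarniLimit (Subgroup.zpowers γ))

/-- The equicontinuity set of `Γ` : points having a neighborhood `U` on which the
restrictions of the elements of `Γ` form a normal family, i.e. a relatively compact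
subset of `C(U, ℙ²_ℂ)` for the compact-open topology. -/
def eqSet (Γ : Subgroup PSL3) : Set P2 :=
  {z : P2 | ∃ U : Set P2, IsOpen U ∧ z ∈ U ∧
    IsCompact (closure {f : C(U, P2) | ∃ γ ∈ Γ, f = (pactCM γ).restrict U})}

/-- A vertex of a family `L` of lines lying in the complement of `Ω`. -/
def IsVertex (Ω : Set P2) (L : Set (Set P2)) (v : P2) : Prop :=
  ∃ ℓ₁ ∈ L, ∃ ℓ₂ ∈ L, ℓ₁ ≠ ℓ₂ ∧ ∃ C : Set (Set P2), C.Infinite ∧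
    (∀ ℓ ∈ C, IsLine ℓ ∧ ℓ ⊆ Ωᶜ) ∧ ℓ₁ ∩ ℓ₂ ∩ ⋂₀ C = {v}

open Classical

/-- Projection from the point `p` onto the line determined by `W` : `projPt p W x` is
the intersection point of the line through `p` and `x` with the line determined by `W`
(junk value if it is not unique). -/
def projPt (p : P2) (W : Submodule ℂ V3) (x : P2) : P2 :=
  if h : ∃ y : P2, y.submodule ≤ W ∧ y.submodule ≤ p.submodule ⊔ x.submodule
  then h.choose else x

/-! ### Topology of the projective plane -/

/-- The space of nonzero vectors of `ℂ³`, of which `ℙ²_ℂ` is the quotient. -/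
abbrev NZ : Type := {v : V3 // v ≠ 0}

lemma isOpenQuotientMap_mk' : IsOpenQuotientMap (Projectivization.mk' ℂ : NZ → P2) := by
  have hq : IsQuotientMap (Projectivization.mk' ℂ : NZ → P2) := isQuotientMap_quotient_mk'
  refine .of_isOpenMap_isQuotientMap (fun U hU => ?_) hq
  rw [← hq.isOpen_preimage]
  -- The saturation of `U` is the union of its scalings.
  have h_sat : Projectivization.mk' ℂ ⁻¹' (Projectivization.mk' ℂ '' U) =
      ⋃ a : ℂˣ, (fun v : NZ => (⟨a • v.1, (smul_ne_zero_iff_ne a).2 v.2⟩ : NZ)) ⁻¹' U := by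
    ext v
    simp only [Set.mem_preimage, Set.mem_image, Set.mem_iUnion]
    constructor
    · rintro ⟨w, hw, hwv⟩
      obtain ⟨a, ha⟩ := (Projectivization.mk_eq_mk_iff ℂ w.1 v.1 w.2 v.2).1 hwv
      refine ⟨a, ?_⟩
      have h_eq : (⟨a • v.1, (smul_ne_zero_iff_ne a).2 v.2⟩ : NZ) = w := Subtype.ext ha
      rw [h_eq]
      exact hw
    · rintro ⟨a, ha⟩
      exact ⟨_, ha, (Projectivization.mk_eq_mk_iff ℂ _ _ _ v.2).2 ⟨a, rfl⟩⟩
  rw [h_sat]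
  refine isOpen_iUnion fun a => hU.preimage ?_
  exact Continuous.subtype_mk (continuous_subtype_val.const_smul a) _

instance : T2Space P2 := by
  rw [t2_iff_isClosed_diagonal]
  have hq := isOpenQuotientMap_mk'
  rw [← (hq.prodMap hq).isQuotientMap.isClosed_preimage]
  -- Proportionality of nonzero vectors is the closed condition that all `2 × 2` minors vanish.
  have h_rel : Prod.map (Projectivization.mk' ℂ : NZ → P2) (Projectivization.mk' ℂ : NZ → P2) ⁻¹'
      Set.diagonal P2 =
      ⋂ i : Fin 3, ⋂ j : Fin 3, {p : NZ × NZ | p.1.1 i * p.2.1 j = p.1.1 j * p.2.1 i} := by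
    ext ⟨v, w⟩
    simp only [Set.mem_preimage, Prod.map_apply, Set.mem_diagonal_iff, Set.mem_iInter,
      Set.mem_ofPred_eq]
    constructor
    · intro h i j
      obtain ⟨a, ha⟩ := (Projectivization.mk_eq_mk_iff' ℂ v.1 w.1 v.2 w.2).1 h
      rw [← ha]
      simp only [Pi.smul_apply, smul_eq_mul]
      ring
    · intro h
      obtain ⟨j, hj⟩ := Function.ne_iff.1 w.2
      refine (Projectivization.mk_eq_mk_iff' ℂ v.1 w.1 v.2 w.2).2 ⟨v.1 j / w.1 j, ?_⟩
      funext i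
      have hj' : w.1 j ≠ 0 := hj
      have h_minor := h i j
      simp only [Pi.smul_apply, smul_eq_mul]
      field_simp
      linear_combination -h_minor
  rw [h_rel]
  have hc1 : ∀ i, Continuous fun p : NZ × NZ => p.1.1 i := fun i =>
    (continuous_apply i).comp (continuous_subtype_val.comp continuous_fst)
  have hc2 : ∀ i, Continuous fun p : NZ × NZ => p.2.1 i := fun i =>
    (continuous_apply i).comp (continuous_subtype_val.comp continuous_snd)
  exact isClosed_iInter fun i => isClosed_iInter fun j =>
    isClosed_eq ((hc1 i).mul (hc2 j)) ((hc1 j).mul (hc2 i))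

lemma exists_compact_nhds_subset {w : P2} {U : Set P2} (hU : IsOpen U) (hw : w ∈ U) :
    ∃ K ∈ 𝓝 w, K ⊆ U ∧ IsCompact K := by
  have hq := isOpenQuotientMap_mk'
  obtain ⟨v, rfl⟩ := hq.surjective w
  have : LocallyCompactSpace NZ := (isOpen_ne (x := (0 : V3))).locallyCompactSpace
  obtain ⟨C, hC, hCU, hCc⟩ := local_compact_nhds ((hU.preimage hq.continuous).mem_nhds hw)
  refine ⟨_, hq.isOpenMap.image_mem_nhds hC, ?_, hCc.image hq.continuous⟩
  rintro _ ⟨x, hx, rfl⟩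
  exact hCU hx

/-! ### The action -/

lemma pact_mul (g h : PSL3) (x : P2) : pact (g * h) x = pact g (pact h x) := by simp [pact]

lemma pact_inv_pact (g : PSL3) (x : P2) : pact g⁻¹ (pact g x) = x := by simp [pact]

lemma pact_pact_inv (g : PSL3) (x : P2) : pact g (pact g⁻¹ x) = x := by simp [pact]

lemma pact_mem_iff {Γ : Subgroup PSL3} {Ω : Set P2} (hinv : ∀ γ ∈ Γ, pact γ '' Ω = Ω)
    {γ : PSL3} (hγ : γ ∈ Γ) {x : P2} : pact γ x ∈ Ω ↔ x ∈ Ω := by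
  constructor
  · intro h
    rw [← pact_inv_pact γ x, ← hinv _ (inv_mem hγ)]
    exact ⟨_, h, rfl⟩
  · intro h
    rw [← hinv _ hγ]
    exact ⟨_, h, rfl⟩

/-- Every projective transformation is induced by a linear map of operator norm one; such maps
form a compact set, which provides limits of sequences of transformations. -/
lemma exists_normalized (g : PSL3) : ∃ N : V3 →L[ℂ] V3, ‖N‖ = 1 ∧
    ∀ v : NZ, ∃ h : N v ≠ 0, pact g (Projectivization.mk' ℂ v) = Projectivization.mk ℂ (N v) h := by
  obtain ⟨A, rfl⟩ := QuotientGroup.mk_surjective g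
  set M : V3 →L[ℂ] V3 := LinearMap.toContinuousLinearMap
    ((Matrix.SpecialLinearGroup.toLin' A : V3 ≃ₗ[ℂ] V3) : V3 →ₗ[ℂ] V3) with hM
  have hMv : ∀ v, M v = Matrix.SpecialLinearGroup.toLin' A v := fun v => rfl
  have hne : ∀ v : V3, v ≠ 0 → M v ≠ 0 := fun v hv => by
    rw [hMv]
    exact (Matrix.SpecialLinearGroup.toLin' A).map_ne_zero_iff.mpr hv
  have hM0 : M ≠ 0 := by
    intro h
    obtain ⟨v, hv⟩ := exists_ne (0 : V3)
    exact hne v hv (by simp [h])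
  have hn : ‖M‖ ≠ 0 := norm_ne_zero_iff.2 hM0
  have hc : ((‖M‖ : ℂ))⁻¹ ≠ 0 := inv_ne_zero (by exact_mod_cast hn)
  refine ⟨((‖M‖ : ℂ))⁻¹ • M, by simp [norm_smul, hn], fun v => ?_⟩
  refine ⟨smul_ne_zero hc (hne _ v.2), ?_⟩
  rw [pact_mk, Projectivization.mk'_eq_mk, smulP2_mk, eq_comm, Projectivization.mk_eq_mk_iff']
  exact ⟨_, rfl⟩

/-- The normalized linear map inducing `g`. -/
def nrm (g : PSL3) : V3 →L[ℂ] V3 := (exists_normalized g).choose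

lemma norm_nrm (g : PSL3) : ‖nrm g‖ = 1 := (exists_normalized g).choose_spec.1

lemma nrm_ne_zero (g : PSL3) (v : NZ) : nrm g v ≠ 0 :=
  ((exists_normalized g).choose_spec.2 v).choose

lemma pact_mk' (g : PSL3) (v : NZ) : pact g (Projectivization.mk' ℂ v) =
    Projectivization.mk' ℂ ⟨nrm g v, nrm_ne_zero g v⟩ :=
  ((exists_normalized g).choose_spec.2 v).choose_spec

/-! ### Proper discontinuity on the Kulkarni region -/

lemma image_eq_of_mapsTo {Γ : Subgroup PSL3} {S : Set P2}
    (h : ∀ γ ∈ Γ, ∀ x ∈ S, pact γ x ∈ S) : ∀ γ ∈ Γ, pact γ '' S = S := by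
  intro γ hγ
  apply subset_antisymm
  · rintro _ ⟨x, hx, rfl⟩
    exact h γ hγ x hx
  · intro x hx
    exact ⟨pact γ⁻¹ x, h _ (inv_mem hγ) x hx, pact_pact_inv γ x⟩

lemma closure_mapsTo {S : Set P2} {γ : PSL3} (h : ∀ x ∈ S, pact γ x ∈ S) :
    ∀ x ∈ closure S, pact γ x ∈ closure S := fun _ hx =>
  map_mem_closure (continuous_pact γ) hx h

lemma L0_mapsTo {Γ : Subgroup PSL3} {γ : PSL3} (hγ : γ ∈ Γ) : ∀ x ∈ L0 Γ, pact γ x ∈ L0 Γ := by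
  refine closure_mapsTo fun x hx => ?_
  refine (Set.Infinite.image (f := fun g => γ * g * γ⁻¹) ?_ hx).mono ?_
  · intro a _ b _ hab
    simpa using hab
  · rintro _ ⟨g, ⟨hg, hgx⟩, rfl⟩
    refine ⟨mul_mem (mul_mem hγ hg) (inv_mem hγ), ?_⟩
    simp only [pact_mul, pact_inv_pact, hgx]

/-- Translating a cluster point by an element of `Γ` gives a cluster point of the same set. -/
lemma setCluster_mapsTo {Γ : Subgroup PSL3} {γ : PSL3} (hγ : γ ∈ Γ) (K : Set P2) :
    ∀ x ∈ setCluster Γ K, pact γ x ∈ setCluster Γ K := by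
  intro x hx U hU
  refine (Set.Infinite.image (f := fun g => γ * g) ?_
    (hx _ ((continuous_pact γ).continuousAt hU))).mono ?_
  · intro a _ b _ hab
    simpa using hab
  · rintro _ ⟨g, ⟨hg, y, ⟨z, hz, rfl⟩, hy⟩, rfl⟩
    refine ⟨mul_mem hγ hg, _, ⟨z, hz, rfl⟩, ?_⟩
    rw [pact_mul]
    exact hy

lemma orbitCluster_eq (Γ : Subgroup PSL3) (z : P2) : orbitCluster Γ z = setCluster Γ {z} := by
  simp [orbitCluster, setCluster]

lemma L1_mapsTo {Γ : Subgroup PSL3} {γ : PSL3} (hγ : γ ∈ Γ) : ∀ x ∈ L1 Γ, pact γ x ∈ L1 Γ := by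
  refine closure_mapsTo fun x hx => ?_
  simp only [Set.mem_iUnion, orbitCluster_eq] at hx ⊢
  obtain ⟨z, hz, hx⟩ := hx
  exact ⟨z, hz, setCluster_mapsTo hγ _ x hx⟩

lemma L2_mapsTo {Γ : Subgroup PSL3} {γ : PSL3} (hγ : γ ∈ Γ) : ∀ x ∈ L2 Γ, pact γ x ∈ L2 Γ := by
  refine closure_mapsTo fun x hx => ?_
  simp only [Set.mem_iUnion] at hx ⊢
  obtain ⟨z, hz, hx⟩ := hx
  exact ⟨z, hz, setCluster_mapsTo hγ _ x hx⟩

lemma kulkarniRegion_mapsTo {Γ : Subgroup PSL3} :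
    ∀ γ ∈ Γ, ∀ x ∈ kulkarniRegion Γ, pact γ x ∈ kulkarniRegion Γ := by
  intro γ hγ x hx hγx
  refine hx ?_
  rw [← pact_inv_pact γ x]
  rcases hγx with (h | h) | h
  · exact Or.inl (Or.inl (L0_mapsTo (inv_mem hγ) _ h))
  · exact Or.inl (Or.inr (L1_mapsTo (inv_mem hγ) _ h))
  · exact Or.inr (L2_mapsTo (inv_mem hγ) _ h)

/-- If infinitely many translates of a compact set `K` meet `K`, then `K` contains one of its own
cluster points. -/
lemma exists_mem_setCluster {Γ : Subgroup PSL3} {K : Set P2} (hK : IsCompact K)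
    (h : {γ : PSL3 | γ ∈ Γ ∧ ((pact γ '' K) ∩ K).Nonempty}.Infinite) :
    ∃ w ∈ K, w ∈ setCluster Γ K := by
  by_contra! hcon
  refine h (hK.induction_on
    (p := fun s => {γ : PSL3 | γ ∈ Γ ∧ ((pact γ '' K) ∩ s).Nonempty}.Finite) ?_ ?_ ?_ ?_)
  · simp
  · intro s t hst ht
    exact ht.subset fun γ hγ => ⟨hγ.1, hγ.2.mono (Set.inter_subset_inter_right _ hst)⟩
  · intro s t hs ht
    refine (hs.union ht).subset ?_
    rintro γ ⟨hγ, y, hy, hys | hyt⟩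
    · exact Or.inl ⟨hγ, y, hy, hys⟩
    · exact Or.inr ⟨hγ, y, hy, hyt⟩
  · intro w hw
    have hw' := hcon w hw
    simp only [setCluster, Set.mem_ofPred_eq, not_forall, Set.not_infinite] at hw'
    obtain ⟨U, hU, hfin⟩ := hw'
    exact ⟨U, mem_nhdsWithin_of_mem_nhds hU, hfin⟩

lemma actsPropDiscOn_kulkarniRegion {Γ : Subgroup PSL3} (hne : (kulkarniRegion Γ).Nonempty) :
    ActsPropDiscOn Γ (kulkarniRegion Γ) := by
  refine ⟨hne, ?_, image_eq_of_mapsTo kulkarniRegion_mapsTo, ?_⟩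
  · exact ((isClosed_closure.union isClosed_closure).union isClosed_closure).isOpen_compl
  · intro K hK hKc
    by_contra hinf
    obtain ⟨w, hwK, hw⟩ := exists_mem_setCluster hKc hinf
    refine hK hwK (Or.inr (subset_closure ?_))
    simp only [Set.mem_iUnion]
    exact ⟨K, ⟨hKc, fun x hx hx' => hK hx (Or.inl hx')⟩, hw⟩

/-! ### Domains whose complement contains three lines in general position -/

lemma disjoint_L0 {Γ : Subgroup PSL3} {Ω : Set P2} (h : ActsPropDiscOn Γ Ω) :
    Disjoint Ω (L0 Γ) := by
  refine Disjoint.closure_right (Set.disjoint_left.2 fun z hz hinf => hinf ?_) h.2.1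
  refine (h.2.2.2 {z} (by simpa using hz) isCompact_singleton).subset ?_
  rintro γ ⟨hγ, hγz⟩
  exact ⟨hγ, z, ⟨z, rfl, hγz⟩, rfl⟩

lemma disjoint_L1 {Γ : Subgroup PSL3} {Ω : Set P2} (h : ActsPropDiscOn Γ Ω) :
    Disjoint Ω (L1 Γ) := by
  refine Disjoint.closure_right (Set.disjoint_left.2 fun w hw hcl => ?_) h.2.1
  simp only [Set.mem_iUnion] at hcl
  obtain ⟨z, -, hwz⟩ := hcl
  obtain ⟨K, hKw, hKΩ, hK⟩ := exists_compact_nhds_subset h.2.1 hw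
  obtain ⟨γ, hγ, hγz⟩ := (hwz K hKw).nonempty
  have hz : z ∈ Ω := (pact_mem_iff h.2.2.1 hγ).1 (hKΩ hγz)
  refine hwz K hKw ((h.2.2.2 (K ∪ {z}) (Set.union_subset hKΩ (by simpa using hz))
    (hK.union isCompact_singleton)).subset ?_)
  rintro g ⟨hg, hgz⟩
  exact ⟨hg, _, ⟨z, Or.inr rfl, rfl⟩, Or.inl hgz⟩

/-- If the complement of `Ω` contains three lines in general position, it contains a family of
lines such that no nonzero vector belongs to all the corresponding planes of `ℂ³`. -/
lemma exists_planes_inf_eq_bot {Ω : Set P2} (h : ¬ LiG Ω ≤ 2) :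
    ∃ 𝒲 : Set (Submodule ℂ V3), (∀ W ∈ 𝒲, Module.finrank ℂ W = 2 ∧
      ∀ p : P2, p.submodule ≤ W → p ∉ Ω) ∧ ∀ v : V3, v ≠ 0 → ∃ W ∈ 𝒲, v ∉ W := by
  simp only [LiG, iSup_le_iff, not_forall, not_le] at h
  obtain ⟨L, ⟨hL, hgen⟩, hcard⟩ := h
  have h3 : (3 : ℕ∞) ≤ L.encard := by
    have := Order.add_one_le_of_lt hcard
    norm_num at this
    exact this
  obtain ⟨T, hTL, hT⟩ := Set.exists_subset_encard_eq h3
  obtain ⟨a, b, c, hab, hac, hbc, rfl⟩ := Set.encard_eq_three.1 hT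
  have haL : a ∈ L := hTL (by simp)
  have hbL : b ∈ L := hTL (by simp)
  have hcL : c ∈ L := hTL (by simp)
  refine ⟨{W | Module.finrank ℂ W = 2 ∧ {p : P2 | p.submodule ≤ W} ∈ L}, ?_, ?_⟩
  · rintro W ⟨hW, hWL⟩
    exact ⟨hW, fun p hp => (hL _ hWL).2 hp⟩
  · intro v hv
    by_contra! hcon
    have key : ∀ ℓ ∈ L, Projectivization.mk ℂ v hv ∈ ℓ := by
      intro ℓ hℓ
      obtain ⟨W, hW, rfl⟩ := (hL ℓ hℓ).1
      have := hcon W ⟨hW, hℓ⟩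
      simpa [Submodule.span_singleton_le_iff_mem] using this
    rcases hgen _ a haL b hbL c hcL (key a haL) (key b hbL) (key c hcL) with h | h | h
    · exact hab h
    · exact hac h
    · exact hbc h

/-- A limit of normalized elements of `Γ` has no kernel vector over `Ω`. If `S w = 0`, choose a line
`φ = 0` in the complement of `Ω` with `φ ∘ S ≠ 0`. The functionals `φ ∘ nrm (g a)` converge to
`φ ∘ S`, which vanishes at `w`, hence they vanish at points close to `w`, that is, at points of
`Ω`. This contradicts the invariance of `Ω`. -/
lemma limit_apply_ne_zero {Γ : Subgroup PSL3} {Ω : Set P2} (hopen : IsOpen Ω)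
    (hinv : ∀ γ ∈ Γ, pact γ '' Ω = Ω) (h3 : ¬ LiG Ω ≤ 2)
    {α : Type*} {u : Filter α} [u.NeBot] {g : α → PSL3} (hg : ∀ᶠ a in u, g a ∈ Γ)
    {S : V3 →L[ℂ] V3} (hS : Filter.Tendsto (fun a => nrm (g a)) u (𝓝 S))
    {w : NZ} (hw : Projectivization.mk' ℂ w ∈ Ω) : S w ≠ 0 := by
  intro hSw
  have hS1 : ‖S‖ = 1 :=
    tendsto_nhds_unique (hS.norm.congr fun a => norm_nrm (g a)) tendsto_const_nhds
  obtain ⟨x, hx⟩ : ∃ x, S x ≠ 0 := by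
    by_contra! hcon
    have : S = 0 := ContinuousLinearMap.ext hcon
    simp [this] at hS1
  obtain ⟨𝒲, h𝒲, hsep⟩ := exists_planes_inf_eq_bot h3
  obtain ⟨W, hW, hxW⟩ := hsep _ hx
  obtain ⟨hdim, hWΩ⟩ := h𝒲 W hW
  obtain ⟨φ, hφx, hφW⟩ := Submodule.exists_le_ker_of_notMem hxW
  have hker : W = LinearMap.ker φ := by
    refine Submodule.eq_of_le_of_finrank_le hφW ?_
    have hlt : LinearMap.ker φ < ⊤ := by
      refine lt_top_iff_ne_top.2 fun htop => hφx ?_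
      have : S x ∈ LinearMap.ker φ := htop ▸ Submodule.mem_top
      exact this
    have := Submodule.finrank_lt_finrank_of_lt hlt
    rw [finrank_top, Module.finrank_fin_fun] at this
    omega
  have hφc : Continuous φ := φ.continuous_of_finiteDimensional
  have hlim : ∀ y : V3, Filter.Tendsto (fun a => φ (nrm (g a) y)) u (𝓝 (φ (S y))) := fun y =>
    (hφc.tendsto _).comp (((ContinuousLinearMap.apply ℂ V3 y).continuous.tendsto S).comp hS)
  -- `z a` is the zero of `φ ∘ nrm (g a)` on the affine line through `w` with direction `x`.
  set z : α → V3 := fun a => w.1 - (φ (nrm (g a) w) / φ (nrm (g a) x)) • x with hz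
  have hzlim : Filter.Tendsto z u (𝓝 w.1) := by
    have h1 := ((hlim w).div (hlim x) hφx).smul_const x
    have h2 := (tendsto_const_nhds (x := w.1)).sub h1
    simpa [hSw] using h2
  obtain ⟨O, hO, hOΩ⟩ : ∃ O ∈ 𝓝 w.1, ∀ v : NZ, v.1 ∈ O → Projectivization.mk' ℂ v ∈ Ω := by
    have hpre := (hopen.preimage isOpenQuotientMap_mk'.continuous).mem_nhds hw
    rw [nhds_subtype_eq_comap, Filter.mem_comap] at hpre
    obtain ⟨O, hO, hsub⟩ := hpre
    exact ⟨O, hO, fun v hv => hsub hv⟩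
  have hev := ((hg.and (hzlim.eventually_mem hO)).and
    (hzlim.eventually_ne w.2)).and ((hlim x).eventually_ne hφx)
  obtain ⟨a, ⟨⟨hga, hzO⟩, hz0⟩, hφa⟩ := hev.exists
  have hmem : pact (g a) (Projectivization.mk' ℂ ⟨z a, hz0⟩) ∈ Ω :=
    (pact_mem_iff hinv hga).2 (hOΩ _ hzO)
  rw [pact_mk'] at hmem
  refine hWΩ _ ?_ hmem
  rw [Projectivization.mk'_eq_mk, Projectivization.submodule_mk,
    Submodule.span_singleton_le_iff_mem, hker, LinearMap.mem_ker]
  simp only [hz, map_sub, map_smul, smul_eq_mul]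
  field_simp
  ring

lemma disjoint_L2 {Γ : Subgroup PSL3} {Ω : Set P2} (h : ActsPropDiscOn Γ Ω)
    (h3 : ¬ LiG Ω ≤ 2) : Disjoint Ω (L2 Γ) := by
  refine Disjoint.closure_right (Set.disjoint_left.2 fun w hw hcl => ?_) h.2.1
  simp only [Set.mem_iUnion] at hcl
  obtain ⟨K, ⟨hK, hKL⟩, hwK⟩ := hcl
  have hq := isOpenQuotientMap_mk'
  obtain ⟨w, rfl⟩ := hq.surjective w
  -- Pairs `(γ, v)` with `γ → ∞` in `Γ`, `v → w` and `γ⁻¹ [v] ∈ K`.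
  set X : Set (PSL3 × NZ) :=
    {p | p.1 ∈ Γ ∧ pact p.1⁻¹ (Projectivization.mk' ℂ p.2) ∈ K} with hX
  have hne : ((Filter.cofinite ×ˢ 𝓝 w) ⊓ Filter.principal X).NeBot := by
    rw [Filter.inf_principal_neBot_iff]
    intro s hs
    obtain ⟨A, hA, B, hB, hAB⟩ := Filter.mem_prod_iff.1 hs
    have hinf := hwK _ (hq.isOpenMap.image_mem_nhds hB)
    obtain ⟨γ, ⟨hγ, y, ⟨k, hk, hky⟩, v, hv, hvy⟩, hγA⟩ :=
      (hinf.sdiff (Filter.mem_cofinite.1 hA)).nonempty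
    refine ⟨(γ, v), hAB ⟨not_not.1 hγA, hv⟩, hγ, ?_⟩
    simp only
    rw [hvy, ← hky, pact_inv_pact]
    exact hk
  set u := Ultrafilter.of ((Filter.cofinite ×ˢ 𝓝 w) ⊓ Filter.principal X) with hu
  have hule : (u : Filter (PSL3 × NZ)) ≤ (Filter.cofinite ×ˢ 𝓝 w) ⊓ Filter.principal X :=
    Ultrafilter.of_le _
  have huX : ∀ᶠ p in (u : Filter (PSL3 × NZ)), p ∈ X :=
    Filter.le_principal_iff.1 (hule.trans inf_le_right)
  have hu1 : Filter.Tendsto Prod.fst (u : Filter (PSL3 × NZ)) Filter.cofinite :=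
    Filter.tendsto_fst.mono_left (hule.trans inf_le_left)
  have hu2 : Filter.Tendsto Prod.snd (u : Filter (PSL3 × NZ)) (𝓝 w) :=
    Filter.tendsto_snd.mono_left (hule.trans inf_le_left)
  obtain ⟨S, -, hS⟩ : ∃ S ∈ Metric.sphere (0 : V3 →L[ℂ] V3) 1,
      Filter.Tendsto (fun p : PSL3 × NZ => nrm p.1⁻¹) u (𝓝 S) := by
    have hc : IsCompact (Metric.sphere (0 : V3 →L[ℂ] V3) 1) := by
      have : ProperSpace (V3 →L[ℂ] V3) := FiniteDimensional.proper ℂ _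
      exact isCompact_sphere _ _
    refine hc.ultrafilter_le_nhds' (u.map fun p : PSL3 × NZ => nrm p.1⁻¹) ?_
    refine Ultrafilter.mem_map.2 (Filter.Eventually.of_forall fun p => ?_)
    simp [norm_nrm]
  have hSw : S w ≠ 0 := limit_apply_ne_zero h.2.1 h.2.2.1 h3
    (huX.mono fun p hp => inv_mem hp.1) hS hw
  -- Since `S w ≠ 0`, both `γ⁻¹ [v]` and `γ⁻¹ [w]` converge to `[S w]`.
  have hconv : ∀ y : PSL3 × NZ → NZ, Filter.Tendsto y u (𝓝 w) → Filter.Tendsto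
      (fun p => pact p.1⁻¹ (Projectivization.mk' ℂ (y p))) u
      (𝓝 (Projectivization.mk' ℂ ⟨S w, hSw⟩)) := by
    intro y hy
    simp only [pact_mk']
    refine (hq.continuous.tendsto _).comp (tendsto_subtype_rng.2 ?_)
    have hyv : Filter.Tendsto (fun p => (y p).1) u (𝓝 w.1) :=
      (continuous_subtype_val.tendsto w).comp hy
    exact (isBoundedBilinearMap_apply.continuous.tendsto (S, w.1)).comp (hS.prodMk_nhds hyv)
  have hmemK : Projectivization.mk' ℂ ⟨S w, hSw⟩ ∈ K :=
    hK.isClosed.mem_of_tendsto (hconv _ hu2) (huX.mono fun p hp => hp.2)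
  refine hKL hmemK (Or.inr (subset_closure ?_))
  simp only [Set.mem_iUnion]
  refine ⟨Projectivization.mk' ℂ w, Set.disjoint_left.1 (disjoint_L0 h) hw, fun U hU hfin => ?_⟩
  have hev := (((hconv _ tendsto_const_nhds).eventually_mem hU).and huX).and
    (hu1.eventually (hfin.inv.compl_mem_cofinite))
  obtain ⟨p, ⟨hpU, hpX⟩, hp⟩ := hev.exists
  exact hp ⟨inv_mem hpX.1, hpU⟩

theorem liG_le_two_of_maximal_of_liG_kulkarni_le_two
    (Γ : Subgroup PSL3) (hΓ : DiscreteTopology ↥Γ) (Ω : Set P2)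
    (hmax : MaxDisc Γ Ω) (h : LiG (kulkarniRegion Γ) ≤ 2) :
    LiG Ω ≤ 2 := by
  by_contra h3
  have hsub : Ω ⊆ kulkarniRegion Γ := by
    rintro w hw ((h0 | h1) | h2)
    · exact Set.disjoint_left.1 (disjoint_L0 hmax.1) hw h0
    · exact Set.disjoint_left.1 (disjoint_L1 hmax.1) hw h1
    · exact Set.disjoint_left.1 (disjoint_L2 hmax.1 h3) hw h2
  have heq := hmax.2 _ (actsPropDiscOn_kulkarniRegion (hmax.1.1.mono hsub)) hsub
  exact h3 (heq ▸ h)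
end
end

section
/- Let Γ ⊂ PSL(3,ℂ) be a discrete group and let Ω ⊆ ℙ²_ℂ be an open Γ-invariant set with LiG(Ω) = 2. Then there exists a point p ∈ ℙ²_ℂ such that γ(p) = p for every γ ∈ Γ; namely, all complex lines contained in ℙ²_ℂ∖Ω pass through a single common point, and this point is fixed by Γ. -/
/-! Since `LiG Ω = 2`, two distinct lines avoid `Ω`, and they meet in a single point `p`
(`IsLine.exists_inter_eq_singleton`). Any line avoiding `Ω` must contain `p`, since otherwise it
would form with the first two a triple in general position (`mem_of_liG_eq_two`).

For `γ ∈ Γ`, the preimage under `γ` of a line avoiding the invariant set `Ω` is again such a line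
(`IsLine.preimage_pact`), so it contains `p`. Thus `γ p` lies on both chosen lines, and therefore
equals `p`. -/

open scoped LinearAlgebra.Projectivization
open Projectivization Matrix Topology

noncomputable section

open Classical

lemma mk_mem_line (W : Submodule ℂ V3) (v : V3) (hv : v ≠ 0) :
    (Projectivization.mk ℂ v hv).submodule ≤ W ↔ v ∈ W := by
  rw [Projectivization.submodule_mk, Submodule.span_singleton_le_iff_mem]

lemma IsLine.preimage_pact {ℓ : Set P2} (hℓ : IsLine ℓ) (γ : PSL3) :
    IsLine (pact γ ⁻¹' ℓ) := by
  obtain ⟨A, rfl⟩ := QuotientGroup.mk_surjective γ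
  obtain ⟨W, hW, rfl⟩ := hℓ
  let e : V3 ≃ₗ[ℂ] V3 := Matrix.SpecialLinearGroup.toLin' A
  refine ⟨W.map (e.symm : V3 →ₗ[ℂ] V3), ?_, ?_⟩
  · rw [← hW]
    exact (e.symm.submoduleMap W).finrank_eq.symm
  · ext q
    induction q using Projectivization.ind with
    | h v hv =>
      simp only [Set.mem_preimage, Set.mem_ofPred_eq, pact_mk, smulP2_mk, mk_mem_line]
      exact (Submodule.mem_map_equiv (e := e.symm) (p := W) (x := v)).symm

/-- Two distinct complex lines meet in exactly one point, because two distinct planes in `ℂ³`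
meet in a one-dimensional subspace. -/
lemma IsLine.exists_inter_eq_singleton {ℓ₁ ℓ₂ : Set P2} (h₁ : IsLine ℓ₁) (h₂ : IsLine ℓ₂)
    (hne : ℓ₁ ≠ ℓ₂) : ∃ p : P2, ℓ₁ ∩ ℓ₂ = {p} := by
  obtain ⟨W₁, hW₁, rfl⟩ := h₁
  obtain ⟨W₂, hW₂, rfl⟩ := h₂
  have hW : W₁ ≠ W₂ := by
    rintro rfl
    exact hne rfl
  have hlt : W₁ < W₁ ⊔ W₂ := by
    refine lt_of_le_of_ne le_sup_left fun h => hW ?_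
    have hle : W₂ ≤ W₁ := by
      rw [h]
      exact le_sup_right
    exact (Submodule.eq_of_le_of_finrank_eq hle (by rw [hW₁, hW₂])).symm
  have h3 := Submodule.finrank_lt_finrank_of_lt hlt
  have h3' : Module.finrank ℂ ↥(W₁ ⊔ W₂) ≤ 3 := by
    simpa using Submodule.finrank_le (W₁ ⊔ W₂)
  have hsum := Submodule.finrank_sup_add_finrank_inf_eq W₁ W₂
  have hinf : Module.finrank ℂ ↥(W₁ ⊓ W₂) = 1 := by lia
  refine ⟨Projectivization.mk'' (W₁ ⊓ W₂) hinf, ?_⟩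
  ext q
  simp only [Set.mem_inter_iff, Set.mem_ofPred_eq, Set.mem_singleton_iff, ← le_inf_iff]
  constructor
  · intro hq
    apply Projectivization.submodule_injective
    rw [Projectivization.submodule_mk'']
    exact Submodule.eq_of_le_of_finrank_eq hq (by rw [hinf, Projectivization.finrank_submodule])
  · rintro rfl
    exact (Projectivization.submodule_mk'' (W₁ ⊓ W₂) hinf).le

/-- If `LiG Ω = 2`, some two distinct lines avoid `Ω`. -/
lemma exists_two_lines {Ω : Set P2} (h2 : LiG Ω = 2) :
    ∃ ℓ₁ ℓ₂ : Set P2, (IsLine ℓ₁ ∧ ℓ₁ ⊆ Ωᶜ) ∧ (IsLine ℓ₂ ∧ ℓ₂ ⊆ Ωᶜ) ∧ ℓ₁ ≠ ℓ₂ := by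
  by_contra! hcon
  have hle : LiG Ω ≤ 1 := by
    refine iSup₂_le fun L hL => Set.encard_le_one_iff.mpr fun a b ha hb => ?_
    exact hcon a b (hL.1 a ha) (hL.1 b hb)
  rw [h2] at hle
  exact absurd hle (by decide)

/-- A line missing the intersection point of two distinct lines would give, together with them,
a triple of lines in general position. -/
lemma mem_of_liG_eq_two {Ω : Set P2} (h2 : LiG Ω = 2) {ℓ₁ ℓ₂ ℓ : Set P2} {p : P2}
    (h₁ : IsLine ℓ₁ ∧ ℓ₁ ⊆ Ωᶜ) (h₂ : IsLine ℓ₂ ∧ ℓ₂ ⊆ Ωᶜ) (hne : ℓ₁ ≠ ℓ₂)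
    (hp : ℓ₁ ∩ ℓ₂ = {p}) (h : IsLine ℓ ∧ ℓ ⊆ Ωᶜ) : p ∈ ℓ := by
  by_contra hpℓ
  have hp₁ : p ∈ ℓ₁ := (hp.ge rfl).1
  have hp₂ : p ∈ ℓ₂ := (hp.ge rfl).2
  have hn₁ : ℓ₁ ≠ ℓ := fun e => hpℓ (e ▸ hp₁)
  have hn₂ : ℓ₂ ≠ ℓ := fun e => hpℓ (e ▸ hp₂)
  have hno : ∀ q, q ∈ ℓ₁ → q ∈ ℓ₂ → q ∉ ℓ := by
    intro q hq₁ hq₂ hq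
    have hqp : q = p := hp.le ⟨hq₁, hq₂⟩
    exact hpℓ (hqp ▸ hq)
  have hmem : ({ℓ₁, ℓ₂, ℓ} : Set (Set P2)) ∈ genFamilies Ω := by
    refine ⟨?_, ?_⟩
    · rintro m (rfl | rfl | rfl) <;> assumption
    · rintro q a (rfl | rfl | rfl) b (rfl | rfl | rfl) c (rfl | rfl | rfl) ha hb hc <;>
        first
        | exact Or.inl rfl
        | exact Or.inr (Or.inl rfl)
        | exact Or.inr (Or.inr rfl)
        | exact absurd ‹_› (hno q ‹_› ‹_›)
  have hle : ({ℓ₁, ℓ₂, ℓ} : Set (Set P2)).encard ≤ LiG Ω :=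
    le_iSup₂ (f := fun (L : Set (Set P2)) (_ : L ∈ genFamilies Ω) => L.encard) _ hmem
  rw [h2, Set.encard_eq_three.mpr ⟨ℓ₁, ℓ₂, ℓ, hne, hn₁, hn₂, rfl⟩] at hle
  exact absurd hle (by decide)

theorem exists_fixed_point_of_liG_eq_two
    (Γ : Subgroup PSL3) (hΓ : DiscreteTopology ↥Γ) (Ω : Set P2)
    (hopen : IsOpen Ω) (hinv : ∀ γ ∈ Γ, pact γ '' Ω = Ω) (h2 : LiG Ω = 2) :
    ∃ p : P2, (∀ γ ∈ Γ, pact γ p = p) ∧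
      ∀ ℓ : Set P2, IsLine ℓ → ℓ ⊆ Ωᶜ → p ∈ ℓ := by
  obtain ⟨ℓ₁, ℓ₂, h₁, h₂, hne⟩ := exists_two_lines h2
  obtain ⟨p, hp⟩ := h₁.1.exists_inter_eq_singleton h₂.1 hne
  refine ⟨p, fun γ hγ => ?_, fun ℓ hℓ hsub => mem_of_liG_eq_two h2 h₁ h₂ hne hp ⟨hℓ, hsub⟩⟩
  have hpull : ∀ ℓ : Set P2, IsLine ℓ ∧ ℓ ⊆ Ωᶜ → pact γ p ∈ ℓ := by
    intro ℓ hℓ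
    refine mem_of_liG_eq_two (ℓ := pact γ ⁻¹' ℓ) h2 h₁ h₂ hne hp
      ⟨hℓ.1.preimage_pact γ, fun x hx hxΩ => hℓ.2 hx ?_⟩
    rw [← hinv γ hγ]
    exact Set.mem_image_of_mem _ hxΩ
  exact hp.le ⟨hpull ℓ₁ h₁, hpull ℓ₂ h₂⟩
end
end

section
/- Let Γ ⊂ PSL(3,ℂ) be a discrete group and let Ω ⊆ ℙ²_ℂ be an open Γ-invariant set such that L0(Γ) ⊆ ℙ²_ℂ∖Ω, LiG(Ω) = 2 and 3 ≤ Li(Ω) < ∞. Let p be the common point of all complex lines contained in ℙ²_ℂ∖Ω (which is fixed by Γ). Then for every complex line ℓ not containing p, the group Π_{p,ℓ}(Γ) of induced biholomorphisms of ℓ is finite; consequently Ker(Π_{p,ℓ}) is a normal subgroup of Γ of finite index. -/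
/-!
Every complex line avoiding `Ω` passes through `p`, and by invariance of `Ω` the group `Γ`
permutes the finite set of these lines, of which there are at least three. Hence the stabilizer
in `Γ` of each such line has finite index, and so has the intersection of three of these
stabilizers.

An element fixing `p` and three lines through `p` lifts to a linear map inducing on the
two-dimensional quotient `ℂ³ / p` a map with three distinct eigenlines, that is, a scalar; it
therefore fixes every line through `p` (`map_le_of_three_planes`, `smul_eq_of_three`). So the
subgroup `pencilKernel Γ p` of elements fixing all lines through `p` has finite index
(`pencilKernel_finiteIndex`).

Points of `ℓ` correspond to lines through `p`, so `pencilKernel Γ p` is the kernel of the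
projection to `ℓ` (`projPt_smul_eq_self_iff`), and the induced map of `ℓ` depends only on the
coset modulo this kernel (`projPt_smul_congr`); there are finitely many cosets.
-/

open scoped LinearAlgebra.Projectivization
open Projectivization Matrix Topology

noncomputable section

open Classical

/-! ### Planes through a fixed line of `ℂ³` -/

open scoped Pointwise

lemma plane_eq_sup {P M : Submodule ℂ V3} (hP : Module.finrank ℂ P = 1)
    (hM : Module.finrank ℂ M = 2) (hPM : P ≤ M) {x : V3} (hx : x ∈ M) (hxP : x ∉ P) :
    M = P ⊔ Submodule.span ℂ {x} := by
  symm
  have hle : P ⊔ Submodule.span ℂ {x} ≤ M :=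
    sup_le hPM ((Submodule.span_singleton_le_iff_mem _ _).2 hx)
  apply Submodule.eq_of_le_of_finrank_le hle
  have hlt : P < P ⊔ Submodule.span ℂ {x} := by
    refine lt_of_le_of_ne le_sup_left fun h => hxP ?_
    rw [h]
    exact Submodule.mem_sup_right (Submodule.mem_span_singleton_self x)
  have := Submodule.finrank_lt_finrank_of_lt hlt
  omega

lemma mem_of_mem_planes {P M M' : Submodule ℂ V3} (hP : Module.finrank ℂ P = 1)
    (hM : Module.finrank ℂ M = 2) (hM' : Module.finrank ℂ M' = 2) (hPM : P ≤ M)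
    (hPM' : P ≤ M') (hne : M ≠ M') {x : V3} (hx : x ∈ M) (hx' : x ∈ M') : x ∈ P := by
  by_contra hxP
  exact hne ((plane_eq_sup hP hM hPM hx hxP).trans (plane_eq_sup hP hM' hPM' hx' hxP).symm)

lemma planes_sup_eq_top {M M' : Submodule ℂ V3}
    (hM : Module.finrank ℂ M = 2) (hM' : Module.finrank ℂ M' = 2)
    (hne : M ≠ M') : M ⊔ M' = ⊤ := by
  apply Submodule.eq_top_of_finrank_eq
  have hlt : M < M ⊔ M' := by
    refine lt_of_le_of_ne le_sup_left fun h => hne ?_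
    symm
    apply Submodule.eq_of_le_of_finrank_eq
    · rw [h]; exact le_sup_right
    · omega
  have h1 := Submodule.finrank_lt_finrank_of_lt hlt
  have h2 := Submodule.finrank_le (M ⊔ M')
  have h3 : Module.finrank ℂ V3 = 3 := by simp
  omega

/-- If `f` preserves `P` and the plane `M ⊇ P`, it acts on the one-dimensional quotient `M / P`
as a scalar. -/
lemma exists_eigenvalue {P M : Submodule ℂ V3} (hP : Module.finrank ℂ P = 1)
    (hM : Module.finrank ℂ M = 2) (hPM : P ≤ M) (f : V3 →ₗ[ℂ] V3) (hfP : P.map f ≤ P)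
    (hfM : M.map f ≤ M) {x : V3} (hx : x ∈ M) (hxP : x ∉ P) :
    ∃ a : ℂ, ∀ y ∈ M, f y - a • y ∈ P := by
  have hMx := plane_eq_sup hP hM hPM hx hxP
  have hfx : f x ∈ P ⊔ Submodule.span ℂ {x} := hMx ▸ hfM (Submodule.mem_map_of_mem hx)
  obtain ⟨q, hq, z, hz, hqz⟩ := Submodule.mem_sup.1 hfx
  obtain ⟨a, rfl⟩ := Submodule.mem_span_singleton.1 hz
  refine ⟨a, fun y hy => ?_⟩
  rw [hMx] at hy
  obtain ⟨r, hr, z, hz, rfl⟩ := Submodule.mem_sup.1 hy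
  obtain ⟨b, rfl⟩ := Submodule.mem_span_singleton.1 hz
  have : f (r + b • x) - a • (r + b • x) = f r - a • r + b • q := by
    rw [map_add, map_smul, ← hqz]
    module
  rw [this]
  exact P.add_mem (P.sub_mem (hfP (Submodule.mem_map_of_mem hr)) (P.smul_mem _ hr))
    (P.smul_mem _ hq)

/-- The linear core: a map preserving `P` and three distinct planes through `P` induces a map of
the two-dimensional space `V3 / P` with three eigenlines, hence a scalar, so that it preserves
every plane through `P`. -/
lemma map_le_of_three_planes {P M₁ M₂ M₃ : Submodule ℂ V3} (hP : Module.finrank ℂ P = 1)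
    (h₁ : Module.finrank ℂ M₁ = 2) (h₂ : Module.finrank ℂ M₂ = 2)
    (h₃ : Module.finrank ℂ M₃ = 2) (hP₁ : P ≤ M₁) (hP₂ : P ≤ M₂) (hP₃ : P ≤ M₃)
    (h₁₂ : M₁ ≠ M₂) (h₁₃ : M₁ ≠ M₃) (h₂₃ : M₂ ≠ M₃) (f : V3 →ₗ[ℂ] V3) (hfP : P.map f ≤ P)
    (hf₁ : M₁.map f ≤ M₁) (hf₂ : M₂.map f ≤ M₂) (hf₃ : M₃.map f ≤ M₃)
    {M : Submodule ℂ V3} (hPM : P ≤ M) : M.map f ≤ M := by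
  have htop := planes_sup_eq_top h₁ h₂ h₁₂
  -- A vector of `M₃` outside `P`, written as `x + y` with `x ∈ M₁` and `y ∈ M₂`, provides
  -- compatible representatives of the three eigenlines.
  obtain ⟨w, hw, hwP⟩ : ∃ w ∈ M₃, w ∉ P := by
    by_contra! h
    have := Submodule.finrank_mono (show M₃ ≤ P from h)
    omega
  obtain ⟨x, hx, y, hy, rfl⟩ := Submodule.mem_sup.1 (htop ▸ Submodule.mem_top : w ∈ M₁ ⊔ M₂)
  have hxP : x ∉ P := fun h => hwP
    (mem_of_mem_planes hP h₂ h₃ hP₂ hP₃ h₂₃ (M₂.add_mem (hP₂ h) hy) hw)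
  have hyP : y ∉ P := fun h => hwP
    (mem_of_mem_planes hP h₁ h₃ hP₁ hP₃ h₁₃ (M₁.add_mem hx (hP₁ h)) hw)
  obtain ⟨a, ha⟩ := exists_eigenvalue hP h₁ hP₁ f hfP hf₁ hx hxP
  obtain ⟨b, hb⟩ := exists_eigenvalue hP h₂ hP₂ f hfP hf₂ hy hyP
  obtain ⟨c, hc⟩ := exists_eigenvalue hP h₃ hP₃ f hfP hf₃ hw hwP
  have hsum : (a - c) • x + (b - c) • y ∈ P := by
    have := P.sub_mem (hc _ hw) (P.add_mem (ha x hx) (hb y hy))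
    convert this using 1
    rw [map_add]
    module
  have hax : (a - c) • x ∈ P := by
    refine mem_of_mem_planes hP h₁ h₂ hP₁ hP₂ h₁₂ (M₁.smul_mem _ hx) ?_
    have := M₂.sub_mem (hP₂ hsum) (M₂.smul_mem (b - c) hy)
    simpa using this
  have hby : (b - c) • y ∈ P := by simpa using P.sub_mem hsum hax
  have hac : a = c := by
    by_contra h
    exact hxP ((P.smul_mem_iff (sub_ne_zero.2 h)).1 hax)
  have hbc : b = c := by
    by_contra h
    exact hyP ((P.smul_mem_iff (sub_ne_zero.2 h)).1 hby)
  subst hac hbc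
  rintro _ ⟨u, hu, rfl⟩
  obtain ⟨r, hr, s, hs, rfl⟩ := Submodule.mem_sup.1 (htop ▸ Submodule.mem_top : u ∈ M₁ ⊔ M₂)
  have h := hPM (P.add_mem (ha r hr) (hb s hs))
  have h' := M.add_mem h (M.smul_mem b hu)
  convert h' using 1
  rw [map_add]
  module

/-! ### Lines of the projective plane and the action on them -/

/-- The set of points of `ℙ²` lying in the linear subspace `M`. -/
def lineOf (M : Submodule ℂ V3) : Set P2 := {x : P2 | x.submodule ≤ M}

lemma lineOf_le_iff {M M' : Submodule ℂ V3} : lineOf M ⊆ lineOf M' ↔ M ≤ M' := by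
  refine ⟨fun h v hv => ?_, fun h x hx => le_trans hx h⟩
  by_cases hv0 : v = 0
  · simp [hv0]
  · have : Projectivization.mk ℂ v hv0 ∈ lineOf M := by
      simpa [lineOf, Projectivization.submodule_mk] using hv
    simpa [lineOf, Projectivization.submodule_mk] using h this

lemma lineOf_injective : Function.Injective lineOf := fun _ _ h =>
  le_antisymm (lineOf_le_iff.1 h.le) (lineOf_le_iff.1 h.ge)

lemma exists_linear (γ : PSL3) : ∃ e : V3 ≃ₗ[ℂ] V3,
    ∀ x : P2, (γ • x).submodule = x.submodule.map (e : V3 →ₗ[ℂ] V3) := by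
  obtain ⟨A, rfl⟩ := QuotientGroup.mk_surjective γ
  refine ⟨Matrix.SpecialLinearGroup.toLin' A, fun x => ?_⟩
  change (pact _ x).submodule = _
  rw [pact_mk]
  induction x using Projectivization.ind with
  | h v hv =>
    rw [smulP2_mk, Projectivization.submodule_mk, Projectivization.submodule_mk,
      Submodule.map_span, Set.image_singleton]
    rfl

lemma smul_lineOf {γ : PSL3} {e : V3 ≃ₗ[ℂ] V3}
    (he : ∀ x : P2, (γ • x).submodule = x.submodule.map (e : V3 →ₗ[ℂ] V3))
    (M : Submodule ℂ V3) : γ • lineOf M = lineOf (M.map (e : V3 →ₗ[ℂ] V3)) := by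
  have hinj : Function.Injective (e : V3 →ₗ[ℂ] V3) := e.injective
  ext x
  rw [Set.mem_smul_set_iff_inv_smul_mem]
  change (γ⁻¹ • x).submodule ≤ M ↔ x.submodule ≤ _
  conv_rhs => rw [← smul_inv_smul γ x, he]
  exact (Submodule.map_le_map_iff_of_injective hinj _ _).symm

/-- The pencil of complex lines through `p`. -/
def pencil (p : P2) : Set (Set P2) := {L | IsLine L ∧ p ∈ L}

lemma smul_isLine (γ : PSL3) {L : Set P2} (hL : IsLine L) : IsLine (γ • L) := by
  obtain ⟨e, he⟩ := exists_linear γ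
  obtain ⟨M, hM, rfl⟩ := hL
  refine ⟨M.map (e : V3 →ₗ[ℂ] V3), ?_, smul_lineOf he M⟩
  rw [← hM]
  exact LinearEquiv.finrank_map_eq e M

lemma smul_mem_pencil {γ : PSL3} {p : P2} (hp : γ • p = p) {L : Set P2} (hL : L ∈ pencil p) :
    γ • L ∈ pencil p := by
  refine ⟨smul_isLine γ hL.1, ?_⟩
  rw [← hp]
  exact Set.smul_mem_smul_set hL.2

lemma finrank_join {p x : P2} (hx : x ≠ p) :
    Module.finrank ℂ ↥(p.submodule ⊔ x.submodule) = 2 := by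
  have h := Submodule.finrank_sup_add_finrank_inf_eq p.submodule x.submodule
  have hinf : p.submodule ⊓ x.submodule = ⊥ := by
    by_contra hne
    have hpos : 1 ≤ Module.finrank ℂ ↥(p.submodule ⊓ x.submodule) :=
      Submodule.one_le_finrank_iff.2 hne
    have h1 := Submodule.eq_of_le_of_finrank_le
      (inf_le_left : p.submodule ⊓ x.submodule ≤ p.submodule)
      (by rw [p.finrank_submodule]; exact hpos)
    have h2 := Submodule.eq_of_le_of_finrank_le
      (inf_le_right : p.submodule ⊓ x.submodule ≤ x.submodule)
      (by rw [x.finrank_submodule]; exact hpos)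
    exact hx (Projectivization.submodule_injective (h2.symm.trans h1))
  rw [hinf, p.finrank_submodule, x.finrank_submodule, finrank_bot] at h
  omega

lemma join_mem_pencil {p x : P2} (hx : x ≠ p) :
    lineOf (p.submodule ⊔ x.submodule) ∈ pencil p :=
  ⟨⟨_, finrank_join hx, rfl⟩, show p.submodule ≤ _ from le_sup_left⟩

lemma smul_join {γ : PSL3} {p : P2} (hp : γ • p = p) (x : P2) :
    γ • lineOf (p.submodule ⊔ x.submodule) = lineOf (p.submodule ⊔ (γ • x).submodule) := by
  obtain ⟨e, he⟩ := exists_linear γ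
  rw [smul_lineOf he, Submodule.map_sup, ← he, ← he, hp]

/-- An element of `PSL(3,ℂ)` fixing `p` and three lines through `p` fixes the whole pencil. -/
lemma smul_eq_of_three {γ : PSL3} {p : P2} (hp : γ • p = p) {L₁ L₂ L₃ : Set P2}
    (h₁ : L₁ ∈ pencil p) (h₂ : L₂ ∈ pencil p) (h₃ : L₃ ∈ pencil p)
    (h₁₂ : L₁ ≠ L₂) (h₁₃ : L₁ ≠ L₃) (h₂₃ : L₂ ≠ L₃)
    (hf₁ : γ • L₁ = L₁) (hf₂ : γ • L₂ = L₂) (hf₃ : γ • L₃ = L₃)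
    {L : Set P2} (hL : L ∈ pencil p) : γ • L = L := by
  obtain ⟨e, he⟩ := exists_linear γ
  obtain ⟨⟨M₁, r₁, rfl⟩, hp₁⟩ := h₁
  obtain ⟨⟨M₂, r₂, rfl⟩, hp₂⟩ := h₂
  obtain ⟨⟨M₃, r₃, rfl⟩, hp₃⟩ := h₃
  obtain ⟨⟨M, r, rfl⟩, hpM⟩ := hL
  have key : M.map (e : V3 →ₗ[ℂ] V3) ≤ M :=
    map_le_of_three_planes p.finrank_submodule r₁ r₂ r₃ hp₁ hp₂ hp₃
      (fun h => h₁₂ (by rw [h])) (fun h => h₁₃ (by rw [h])) (fun h => h₂₃ (by rw [h]))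
      (e : V3 →ₗ[ℂ] V3) (by rw [← he, hp])
      (lineOf_injective ((smul_lineOf he M₁).symm.trans hf₁)).le
      (lineOf_injective ((smul_lineOf he M₂).symm.trans hf₂)).le
      (lineOf_injective ((smul_lineOf he M₃).symm.trans hf₃)).le hpM
  have heq : M.map (e : V3 →ₗ[ℂ] V3) = M :=
    Submodule.eq_of_le_of_finrank_eq key (LinearEquiv.finrank_map_eq e M)
  exact (smul_lineOf he M).trans (congrArg lineOf heq)

/-! ### The projection from `p` -/

lemma exists_mem_inter {W M : Submodule ℂ V3} (hW : Module.finrank ℂ W = 2)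
    (hM : Module.finrank ℂ M = 2) : ∃ y : P2, y.submodule ≤ W ∧ y.submodule ≤ M := by
  have h := Submodule.finrank_sup_add_finrank_inf_eq W M
  have h3 : Module.finrank ℂ V3 = 3 := by simp
  have hle := Submodule.finrank_le (W ⊔ M)
  have hne : W ⊓ M ≠ ⊥ := Submodule.one_le_finrank_iff.1 (by omega)
  obtain ⟨v, hv, hv0⟩ := Submodule.exists_mem_ne_zero_of_ne_bot hne
  refine ⟨Projectivization.mk ℂ v hv0, ?_, ?_⟩ <;>
    rw [Projectivization.submodule_mk, Submodule.span_singleton_le_iff_mem]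
  exacts [hv.1, hv.2]

lemma join_eq {p y : P2} {M : Submodule ℂ V3} (hM : Module.finrank ℂ M = 2)
    (hpM : p.submodule ≤ M) (hyM : y.submodule ≤ M) (hy : y ≠ p) :
    p.submodule ⊔ y.submodule = M :=
  Submodule.eq_of_le_of_finrank_eq (sup_le hpM hyM) (by rw [finrank_join hy, hM])

lemma projPt_eq_iff {p : P2} {W : Submodule ℂ V3} (hW : Module.finrank ℂ W = 2)
    (hpW : ¬ p.submodule ≤ W) {x : P2} (hx : x ≠ p) (z : P2) :
    projPt p W x = z ↔ z.submodule ≤ W ∧ z ∈ lineOf (p.submodule ⊔ x.submodule) := by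
  have hex := exists_mem_inter hW (finrank_join hx)
  have hspec : (projPt p W x).submodule ≤ W ∧
      (projPt p W x).submodule ≤ p.submodule ⊔ x.submodule := by
    unfold projPt
    rw [dif_pos hex]
    exact hex.choose_spec
  refine ⟨fun h => h ▸ hspec, fun h => ?_⟩
  -- Two distinct points of `W` on the line through `p` and `x` would put `p` into `W`.
  by_contra hne
  have hj := join_eq (finrank_join hx) h.2 hspec.2 hne
  exact hpW (le_trans (le_sup_left.trans hj.ge) (sup_le h.1 hspec.1))

/-- An element fixing `p` is trivial under the projection to the line of `W` iff it fixes
every line through `p`. -/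
lemma projPt_smul_eq_self_iff {γ : PSL3} {p : P2} (hp : γ • p = p) {W : Submodule ℂ V3}
    (hW : Module.finrank ℂ W = 2) (hpW : ¬ p.submodule ≤ W) :
    (∀ L ∈ pencil p, γ • L = L) ↔ ∀ x ∈ lineOf W, projPt p W (γ • x) = x := by
  have hne : ∀ x ∈ lineOf W, x ≠ p := fun x hx h => hpW (h ▸ hx)
  have hne' : ∀ x ∈ lineOf W, γ • x ≠ p := fun x hx h =>
    hne x hx (MulAction.injective γ (h.trans hp.symm))
  constructor
  · intro h x hx
    rw [projPt_eq_iff hW hpW (hne' x hx), ← smul_join hp, h _ (join_mem_pencil (hne x hx))]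
    exact ⟨hx, show x.submodule ≤ _ from le_sup_right⟩
  · rintro h _ ⟨⟨M, hM, rfl⟩, hpM⟩
    obtain ⟨x, hxW, hxM⟩ := exists_mem_inter hW hM
    have hx := (projPt_eq_iff hW hpW (hne' x hxW) x).1 (h x hxW)
    change γ • lineOf M = lineOf M
    rw [← join_eq hM hpM hxM (hne x hxW), smul_join hp,
      join_eq (finrank_join (hne' x hxW)) le_sup_left hx.2 (hne x hxW)]

/-! ### Finiteness -/

/-- The elements of `Γ` fixing every line through `p`. -/
def pencilKernel (Γ : Subgroup PSL3) (p : P2) : Subgroup ↥Γ :=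
  ⨅ L ∈ pencil p, MulAction.stabilizer ↥Γ L

lemma mem_pencilKernel {Γ : Subgroup PSL3} {p : P2} {γ : ↥Γ} :
    γ ∈ pencilKernel Γ p ↔ ∀ L ∈ pencil p, (γ : PSL3) • L = L := by
  simp only [pencilKernel, Subgroup.mem_iInf, MulAction.mem_stabilizer_iff]
  rfl

lemma pencilKernel_normal {Γ : Subgroup PSL3} {p : P2} (hp : ∀ γ ∈ Γ, γ • p = p) :
    (pencilKernel Γ p).Normal := by
  refine ⟨fun n hn g => ?_⟩
  rw [mem_pencilKernel] at hn ⊢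
  intro L hL
  have hL' : (g : PSL3)⁻¹ • L ∈ pencil p := smul_mem_pencil (hp _ (Γ.inv_mem g.2)) hL
  rw [Subgroup.coe_mul, Subgroup.coe_mul, mul_smul, mul_smul, Subgroup.coe_inv, hn _ hL',
    smul_inv_smul]

lemma finiteIndex_stabilizer {Γ : Subgroup PSL3} {S : Set (Set P2)} (hS : S.Finite)
    (hinv : ∀ γ ∈ Γ, ∀ L ∈ S, γ • L ∈ S) {L : Set P2} (hL : L ∈ S) :
    (MulAction.stabilizer ↥Γ L).FiniteIndex := by
  have hsub : MulAction.orbit ↥Γ L ⊆ S := by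
    rintro _ ⟨γ, rfl⟩
    exact hinv γ γ.2 L hL
  have hfin : (MulAction.orbit ↥Γ L).Finite := hS.subset hsub
  refine ⟨?_⟩
  rw [MulAction.index_stabilizer]
  exact ((Set.ncard_pos hfin).2 (MulAction.nonempty_orbit L)).ne'

lemma pencilKernel_finiteIndex {Γ : Subgroup PSL3} {p : P2} (hp : ∀ γ ∈ Γ, γ • p = p)
    {S : Set (Set P2)} (hS : S.Finite) (hSp : S ⊆ pencil p) (hcard : 2 < S.ncard)
    (hinv : ∀ γ ∈ Γ, ∀ L ∈ S, γ • L ∈ S) : (pencilKernel Γ p).FiniteIndex := by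
  obtain ⟨L₁, L₂, L₃, h₁, h₂, h₃, h₁₂, h₁₃, h₂₃⟩ := (Set.two_lt_ncard_iff hS).1 hcard
  have := finiteIndex_stabilizer hS hinv h₁
  have := finiteIndex_stabilizer hS hinv h₂
  have := finiteIndex_stabilizer hS hinv h₃
  have hle : MulAction.stabilizer ↥Γ L₁ ⊓ MulAction.stabilizer ↥Γ L₂ ⊓
      MulAction.stabilizer ↥Γ L₃ ≤ pencilKernel Γ p := by
    rintro γ ⟨⟨f₁, f₂⟩, f₃⟩
    exact mem_pencilKernel.2 fun L hL => smul_eq_of_three (hp γ γ.2) (hSp h₁) (hSp h₂) (hSp h₃)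
      h₁₂ h₁₃ h₂₃ f₁ f₂ f₃ hL
  exact Subgroup.finiteIndex_of_le hle

/-- The map induced on the line of `W` depends only on the coset modulo `pencilKernel`. -/
lemma projPt_smul_congr {Γ : Subgroup PSL3} {p : P2} (hp : ∀ γ ∈ Γ, γ • p = p)
    {W : Submodule ℂ V3} (hW : Module.finrank ℂ W = 2) (hpW : ¬ p.submodule ≤ W)
    {γ δ : ↥Γ} (h : γ⁻¹ * δ ∈ pencilKernel Γ p) {x : P2} (hx : x ∈ lineOf W) :
    projPt p W ((γ : PSL3) • x) = projPt p W ((δ : PSL3) • x) := by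
  have hxp : x ≠ p := fun h => hpW (h ▸ hx)
  have hne : ∀ γ : ↥Γ, (γ : PSL3) • x ≠ p := fun γ h =>
    hxp (MulAction.injective (γ : PSL3) (h.trans (hp γ γ.2).symm))
  have hline : lineOf (p.submodule ⊔ ((γ : PSL3) • x).submodule) =
      lineOf (p.submodule ⊔ ((δ : PSL3) • x).submodule) := by
    have := mem_pencilKernel.1 h _ (join_mem_pencil hxp)
    rw [Subgroup.coe_mul, Subgroup.coe_inv, mul_smul, inv_smul_eq_iff] at this
    rw [← smul_join (hp γ γ.2), ← smul_join (hp δ δ.2), this]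
  rw [projPt_eq_iff hW hpW (hne γ), hline, ← projPt_eq_iff hW hpW (hne δ)]

theorem projection_group_finite_of_liG_eq_two
    (Γ : Subgroup PSL3) (hΓ : DiscreteTopology ↥Γ) (Ω : Set P2)
    (hopen : IsOpen Ω) (hinv : ∀ γ ∈ Γ, pact γ '' Ω = Ω)
    (hL0 : L0 Γ ⊆ Ωᶜ) (h2 : LiG Ω = 2) (h3 : 3 ≤ Li Ω) (hfin : Li Ω ≠ ⊤)
    (p : P2) (hp : ∀ γ ∈ Γ, pact γ p = p)
    (hcommon : ∀ ℓ : Set P2, IsLine ℓ → ℓ ⊆ Ωᶜ → p ∈ ℓ) :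
    ∀ (W : Submodule ℂ V3) (ℓ : Set P2), Module.finrank ℂ W = 2 →
      ℓ = {x : P2 | x.submodule ≤ W} → p ∉ ℓ →
      ({g : ℓ → P2 | ∃ γ ∈ Γ, g = fun x : ℓ => projPt p W (pact γ (x : P2))}.Finite ∧
        ∃ N : Subgroup ↥Γ,
          (∀ γ : ↥Γ, γ ∈ N ↔ ∀ x ∈ ℓ, projPt p W (pact ↑γ x) = x) ∧
          N.Normal ∧ N.FiniteIndex) := by
  intro W ℓ hW hℓ hpℓ
  have hpW : ¬ p.submodule ≤ W := by
    rw [hℓ] at hpℓ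
    exact hpℓ
  have hS : (linesIn Ωᶜ).Finite := Set.encard_ne_top_iff.1 hfin
  have hcard : 2 < (linesIn Ωᶜ).ncard := by
    have h : ((3 : ℕ) : ℕ∞) ≤ ((linesIn Ωᶜ).ncard : ℕ∞) := by
      rw [hS.cast_ncard_eq]
      exact h3
    exact Nat.cast_le.1 h
  have hSinv : ∀ γ ∈ Γ, ∀ L ∈ linesIn Ωᶜ, γ • L ∈ linesIn Ωᶜ := by
    intro γ hγ L hL
    refine ⟨smul_isLine γ hL.1, ?_⟩
    have hΩ : γ • Ω = Ω := hinv γ hγ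
    rw [← hΩ, ← Set.smul_set_compl]
    exact Set.smul_set_mono hL.2
  have hNfin : (pencilKernel Γ p).FiniteIndex :=
    pencilKernel_finiteIndex hp hS (fun L hL => ⟨hL.1, hcommon L hL.1 hL.2⟩) hcard hSinv
  refine ⟨?_, pencilKernel Γ p, fun γ => ?_, pencilKernel_normal hp, hNfin⟩
  · refine (Set.finite_range fun (q : ↥Γ ⧸ pencilKernel Γ p) (x : ℓ) =>
      projPt p W (pact (q.out : PSL3) (x : P2))).subset ?_
    rintro _ ⟨γ, hγ, rfl⟩
    refine ⟨QuotientGroup.mk ⟨γ, hγ⟩, ?_⟩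
    funext x
    have hx : (x : P2) ∈ lineOf W := hℓ.le x.2
    refine projPt_smul_congr (γ := Quotient.out _) (δ := ⟨γ, hγ⟩) hp hW hpW ?_ hx
    exact QuotientGroup.eq.1 (QuotientGroup.out_eq' _)
  · rw [mem_pencilKernel, hℓ]
    exact projPt_smul_eq_self_iff (hp γ γ.2) hW hpW
end
end

section
/- Let Γ ⊂ PSL(3,ℂ) be a discrete subgroup and let Ω ⊆ ℙ²_ℂ be either Eq(Γ), the Kulkarni discontinuity region Ω(Γ), the complement ℙ²_ℂ∖C(Γ), or a maximal open set on which Γ acts properly discontinuously. If LiG(Ω) ≥ 4, then Li(Ω) is infinite, i.e. infinitely many complex lines are contained in ℙ²_ℂ∖Ω. -/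
/-!
If only finitely many lines lie in the complement of `Ω`, then `Γ` is finite. Indeed `Γ` permutes
the lines contained in `Ωᶜ`, because `Ωᶜ` is `Γ`-invariant in each of the four cases
(`IsRegion.pact_mem_compl`), and an element of `PSL(3,ℂ)` is determined by the images of four lines
in general position, since these form a projective frame of the dual plane
(`homothety_of_preserves_four`, `eq_one_of_fixes_four`). So `Γ` injects into the finite set of
4-tuples of lines in `Ωᶜ`. For a finite group, however, `Ω` is the whole plane
(`IsRegion.eq_univ`), and its complement contains no line at all.
-/

open scoped LinearAlgebra.Projectivization
open Projectivization Matrix Topology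

noncomputable section

open Classical

/-! ### Four planes in general position -/

lemma exists_dual_ker_eq {W : Submodule ℂ V3} (hW : Module.finrank ℂ W = 2) :
    ∃ f : V3 →ₗ[ℂ] ℂ, ∀ v, v ∈ W ↔ f v = 0 := by
  have h1 : Module.finrank ℂ (V3 ⧸ W) = Module.finrank ℂ ℂ := by
    have := W.finrank_quotient_add_finrank
    simp only [Module.finrank_fin_fun, Module.finrank_self] at this ⊢
    omega
  let e := LinearEquiv.ofFinrankEq (V3 ⧸ W) ℂ h1
  refine ⟨e.toLinearMap ∘ₗ W.mkQ, fun v => ?_⟩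
  simp

lemma exists_ne_zero_mem_inf {W W' : Submodule ℂ V3} (hW : Module.finrank ℂ W = 2)
    (hW' : Module.finrank ℂ W' = 2) : ∃ v : V3, v ≠ 0 ∧ v ∈ W ∧ v ∈ W' := by
  have h := Submodule.finrank_sup_add_finrank_inf_eq W W'
  have h3 : Module.finrank ℂ ↥(W ⊔ W') ≤ 3 := by
    simpa using Submodule.finrank_le (W ⊔ W')
  have hne : W ⊓ W' ≠ ⊥ := by
    intro hb
    rw [hb, finrank_bot] at h
    omega
  obtain ⟨v, hv, hv0⟩ := Submodule.exists_mem_ne_zero_of_ne_bot hne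
  exact ⟨v, hv0, hv.1, hv.2⟩

lemma exists_smul_of_ker_le {f g : V3 →ₗ[ℂ] ℂ} (h : ∀ v, f v = 0 → g v = 0) :
    ∃ d : ℂ, ∀ v, g v = d * f v := by
  by_cases hf : ∃ u, f u ≠ 0
  · obtain ⟨u, hu⟩ := hf
    refine ⟨g u / f u, fun v => ?_⟩
    have := h (f u • v - f v • u) (by simp [mul_comm])
    simp only [map_sub, map_smul, smul_eq_mul] at this
    field_simp
    linear_combination this
  · push Not at hf
    exact ⟨0, fun v => by simp [h v (hf v)]⟩

/-- A linear map preserving four planes of `ℂ³`, no three of which share a nonzero vector, is a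
homothety: four lines in general position form a projective frame of the dual plane. Each
functional `f i` with kernel `W i` is scaled by some `d i`; a nonzero vector in the intersection of
two of the planes is an eigenvector whose eigenvalue is `d i` for each of the other two indices,
so all `d i` agree. -/
lemma homothety_of_preserves_four (A : V3 →ₗ[ℂ] V3) (W : Fin 4 → Submodule ℂ V3)
    (hW : ∀ i, Module.finrank ℂ (W i) = 2)
    (hgen : ∀ i j k, i ≠ j → i ≠ k → j ≠ k → ∀ v, v ∈ W i → v ∈ W j → v ∈ W k → v = 0)
    (hA : ∀ i, ∀ v ∈ W i, A v ∈ W i) : ∃ c : ℂ, ∀ v, A v = c • v := by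
  choose f hf using fun i => exists_dual_ker_eq (hW i)
  have hd : ∀ i, ∃ d : ℂ, ∀ v, f i (A v) = d * f i v := fun i =>
    exists_smul_of_ker_le (f := f i) (g := f i ∘ₗ A) fun v hv =>
      (hf i _).1 (hA i v ((hf i v).2 hv))
  choose d hd using hd
  have key : ∀ i j k l : Fin 4, i ≠ k → i ≠ l → j ≠ k → j ≠ l → k ≠ l → d i = d j := by
    intro i j k l hik hil hjk hjl hkl
    obtain ⟨v, hv0, hvk, hvl⟩ := exists_ne_zero_mem_inf (hW k) (hW l)
    have hi : f i v ≠ 0 := fun h => hv0 (hgen i k l hik hil hkl v ((hf i v).2 h) hvk hvl)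
    have hj : f j v ≠ 0 := fun h => hv0 (hgen j k l hjk hjl hkl v ((hf j v).2 h) hvk hvl)
    have hAv : A v - d i • v = 0 :=
      hgen i k l hik hil hkl _ ((hf i _).2 (by simp [hd]))
        (sub_mem (hA k v hvk) (Submodule.smul_mem _ _ hvk))
        (sub_mem (hA l v hvl) (Submodule.smul_mem _ _ hvl))
    have h2 := hd j v
    rw [sub_eq_zero.1 hAv, map_smul, smul_eq_mul] at h2
    exact mul_right_cancel₀ hj h2
  have h01 : d 1 = d 0 := key 1 0 2 3 (by decide) (by decide) (by decide) (by decide) (by decide)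
  have h02 : d 2 = d 0 := key 2 0 1 3 (by decide) (by decide) (by decide) (by decide) (by decide)
  refine ⟨d 0, fun v => sub_eq_zero.1 ?_⟩
  refine hgen 0 1 2 (by decide) (by decide) (by decide) _ ?_ ?_ ?_ <;>
    refine (hf _ _).2 ?_ <;> simp [hd, h01, h02]

lemma pact_one (x : P2) : pact 1 x = x := one_smul PSL3 x

/-- The action of an element of `PSL(3,ℂ)` on `ℙ²`, as a homeomorphism. -/
def pactHomeo (g : PSL3) : P2 ≃ₜ P2 where
  toFun := pact g
  invFun := pact g⁻¹
  left_inv := pact_inv_pact g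
  right_inv := pact_pact_inv g
  continuous_toFun := continuous_pact g
  continuous_invFun := continuous_pact g⁻¹

lemma mk_submodule_le_iff {v : V3} (hv : v ≠ 0) (W : Submodule ℂ V3) :
    (Projectivization.mk ℂ v hv).submodule ≤ W ↔ v ∈ W := by
  rw [Projectivization.submodule_mk, Submodule.span_singleton_le_iff_mem]

lemma IsLine.pact_image {ℓ : Set P2} (hℓ : IsLine ℓ) (g : PSL3) : IsLine (pact g '' ℓ) := by
  obtain ⟨W, hW, rfl⟩ := hℓ
  obtain ⟨A, rfl⟩ := QuotientGroup.mk_surjective g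
  let e : V3 ≃ₗ[ℂ] V3 := Matrix.SpecialLinearGroup.toLin' A
  refine ⟨W.map (e : V3 →ₗ[ℂ] V3), by rw [LinearEquiv.finrank_map_eq, hW], ?_⟩
  rw [pact_mk]
  ext p
  constructor
  · rintro ⟨q, hq, rfl⟩
    induction q using Projectivization.ind with
    | h v hv =>
      rw [Set.mem_ofPred_eq, mk_submodule_le_iff] at hq
      rw [Set.mem_ofPred_eq, smulP2_mk, mk_submodule_le_iff]
      exact ⟨v, hq, rfl⟩
  · intro hp
    induction p using Projectivization.ind with
    | h v hv =>
      rw [Set.mem_ofPred_eq, mk_submodule_le_iff] at hp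
      obtain ⟨u, hu, huv⟩ := hp
      subst huv
      have hu0 : u ≠ 0 := by
        rintro rfl
        simp at hv
      exact ⟨Projectivization.mk ℂ u hu0, (mk_submodule_le_iff hu0 W).2 hu, rfl⟩

lemma IsLine.nonempty {ℓ : Set P2} (hℓ : IsLine ℓ) : ℓ.Nonempty := by
  obtain ⟨W, hW, rfl⟩ := hℓ
  have hne : W ≠ ⊥ := by
    rintro rfl
    simp at hW
  obtain ⟨v, hv, hv0⟩ := Submodule.exists_mem_ne_zero_of_ne_bot hne
  exact ⟨Projectivization.mk ℂ v hv0, (mk_submodule_le_iff hv0 W).2 hv⟩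

lemma eq_one_of_fixes_four (g : PSL3) (ℓ : Fin 4 → Set P2) (hℓ : ∀ i, IsLine (ℓ i))
    (hgen : ∀ i j k, i ≠ j → i ≠ k → j ≠ k → ∀ p, p ∈ ℓ i → p ∈ ℓ j → p ∉ ℓ k)
    (hg : ∀ i, pact g '' ℓ i = ℓ i) : g = 1 := by
  obtain ⟨A, rfl⟩ := QuotientGroup.mk_surjective g
  choose W hW hℓW using hℓ
  have hmem : ∀ i v (hv : v ≠ 0), Projectivization.mk ℂ v hv ∈ ℓ i ↔ v ∈ W i := by
    intro i v hv
    rw [hℓW i, Set.mem_ofPred_eq, mk_submodule_le_iff]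
  obtain ⟨c, hc⟩ := homothety_of_preserves_four
    (Matrix.SpecialLinearGroup.toLin' A : V3 ≃ₗ[ℂ] V3).toLinearMap W hW
    (by
      intro i j k hij hik hjk v hi hj hk
      by_contra hv
      exact hgen i j k hij hik hjk _ ((hmem i v hv).2 hi) ((hmem j v hv).2 hj)
        ((hmem k v hv).2 hk))
    (by
      intro i v hv
      by_cases hv0 : v = 0
      · simp [hv0]
      · have h1 : pact (QuotientGroup.mk A : PSL3) (Projectivization.mk ℂ v hv0) ∈ ℓ i := by
          rw [← hg i]
          exact ⟨_, (hmem i v hv0).2 hv, rfl⟩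
        rw [pact_mk, smulP2_mk, hmem] at h1
        exact h1)
  have hcen : A ∈ Subgroup.center SL3 := by
    rw [Subgroup.mem_center_iff]
    intro B
    apply Matrix.SpecialLinearGroup.toLin'_injective
    ext1 v
    rw [map_mul, map_mul]
    have h := fun v => hc v
    simp only [LinearEquiv.coe_coe] at h
    simp only [LinearEquiv.mul_apply, h, map_smul]
  exact (QuotientGroup.eq_one_iff A).2 hcen

instance : T1Space P2 := by
  refine ⟨fun x => ?_⟩
  induction x using Projectivization.ind with
  | h v hv =>
    refine isQuotientMap_quotient_mk'.isClosed_preimage.1 ?_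
    have : (Quotient.mk'' ⁻¹' {Projectivization.mk ℂ v hv} : Set {v : V3 // v ≠ 0}) =
        Subtype.val ⁻¹' ((ℂ ∙ v : Submodule ℂ V3) : Set V3) := by
      ext ⟨w, hw⟩
      change Projectivization.mk ℂ w hw = Projectivization.mk ℂ v hv ↔ w ∈ (ℂ ∙ v)
      rw [Projectivization.mk_eq_mk_iff', Submodule.mem_span_singleton]
    exact this ▸ (Submodule.closed_of_finiteDimensional _).preimage continuous_subtype_val

/-! ### Invariance of the limit sets -/

section Invariance

variable {Γ Γ' : Subgroup PSL3} {g : PSL3}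

lemma infinite_of_conj (h : ∀ γ ∈ Γ, g * γ * g⁻¹ ∈ Γ') {P Q : PSL3 → Prop}
    (hPQ : ∀ γ, P γ → Q (g * γ * g⁻¹)) (hP : {γ | γ ∈ Γ ∧ P γ}.Infinite) :
    {γ | γ ∈ Γ' ∧ Q γ}.Infinite := by
  refine (hP.image (MulAut.conj g).injective.injOn).mono ?_
  rintro _ ⟨γ, ⟨h1, h2⟩, rfl⟩
  exact ⟨h γ h1, hPQ γ h2⟩

lemma pact_mem_closure {S T : Set P2} (h : ∀ z ∈ S, pact g z ∈ T) {z : P2} (hz : z ∈ closure S) :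
    pact g z ∈ closure T :=
  map_mem_closure (continuous_pact g) hz h

lemma pact_mem_L0 (h : ∀ γ ∈ Γ, g * γ * g⁻¹ ∈ Γ') {z : P2} (hz : z ∈ L0 Γ) :
    pact g z ∈ L0 Γ' := by
  refine pact_mem_closure (fun w hw => ?_) hz
  refine infinite_of_conj h (fun γ hγ => ?_) hw
  rw [pact_mul, pact_inv_pact, pact_mul, hγ]

lemma pact_mem_setCluster (h : ∀ γ ∈ Γ, g * γ * g⁻¹ ∈ Γ') {K : Set P2} {w : P2}
    (hw : w ∈ setCluster Γ K) : pact g w ∈ setCluster Γ' (pact g '' K) := by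
  intro U hU
  refine infinite_of_conj h (fun γ => ?_) (hw _ ((continuous_pact g).continuousAt hU))
  rintro ⟨_, ⟨y, hy, rfl⟩, hyU⟩
  refine ⟨_, ⟨_, ⟨y, hy, rfl⟩, rfl⟩, ?_⟩
  rw [pact_mul, pact_inv_pact, pact_mul]
  exact hyU

lemma pact_mem_orbitCluster (h : ∀ γ ∈ Γ, g * γ * g⁻¹ ∈ Γ') {z w : P2}
    (hw : w ∈ orbitCluster Γ z) : pact g w ∈ orbitCluster Γ' (pact g z) := by
  intro U hU
  refine infinite_of_conj h (fun γ hγ => ?_) (hw _ ((continuous_pact g).continuousAt hU))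
  rw [pact_mul, pact_inv_pact, pact_mul]
  exact hγ

lemma pact_mem_L1 (h : ∀ γ ∈ Γ, g * γ * g⁻¹ ∈ Γ')
    (hinv : ∀ γ ∈ Γ', g⁻¹ * γ * g⁻¹⁻¹ ∈ Γ) {z : P2} (hz : z ∈ L1 Γ) :
    pact g z ∈ L1 Γ' := by
  refine pact_mem_closure (fun w hw => ?_) hz
  simp only [Set.mem_iUnion] at hw ⊢
  obtain ⟨x, hx, hw⟩ := hw
  refine ⟨pact g x, fun hgx => hx ?_, pact_mem_orbitCluster h hw⟩
  simpa only [pact_inv_pact] using pact_mem_L0 hinv hgx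

lemma pact_mem_L2 (h : ∀ γ ∈ Γ, g * γ * g⁻¹ ∈ Γ')
    (hinv : ∀ γ ∈ Γ', g⁻¹ * γ * g⁻¹⁻¹ ∈ Γ) {z : P2} (hz : z ∈ L2 Γ) :
    pact g z ∈ L2 Γ' := by
  have hback : ∀ γ ∈ Γ, g⁻¹⁻¹ * γ * g⁻¹⁻¹⁻¹ ∈ Γ' := by simpa only [inv_inv] using h
  refine pact_mem_closure (fun w hw => ?_) hz
  simp only [Set.mem_iUnion] at hw ⊢
  obtain ⟨K, ⟨hK, hKL⟩, hw⟩ := hw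
  refine ⟨pact g '' K, ⟨hK.image (continuous_pact g), ?_⟩, pact_mem_setCluster h hw⟩
  rintro _ ⟨x, hx, rfl⟩ hgx
  refine hKL hx ?_
  rcases hgx with hgx | hgx
  · exact Or.inl (by simpa only [pact_inv_pact] using pact_mem_L0 hinv hgx)
  · exact Or.inr (by simpa only [pact_inv_pact] using pact_mem_L1 hinv hback hgx)

/-- If `g` conjugates `Γ` onto `Γ'`, then `g` maps `Λ(Γ)` into `Λ(Γ')`. -/
lemma pact_mem_kulkarniLimit (h : ∀ γ ∈ Γ, g * γ * g⁻¹ ∈ Γ')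
    (hinv : ∀ γ ∈ Γ', g⁻¹ * γ * g⁻¹⁻¹ ∈ Γ) {z : P2}
    (hz : z ∈ kulkarniLimit Γ) : pact g z ∈ kulkarniLimit Γ' := by
  rcases hz with (hz | hz) | hz
  · exact Or.inl (Or.inl (pact_mem_L0 h hz))
  · exact Or.inl (Or.inr (pact_mem_L1 h hinv hz))
  · exact Or.inr (pact_mem_L2 h hinv hz)

lemma pact_mem_CSet (hg : g ∈ Γ) {z : P2} (hz : z ∈ CSet Γ) : pact g z ∈ CSet Γ := by
  refine pact_mem_closure (fun w hw => ?_) hz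
  simp only [Set.mem_iUnion] at hw ⊢
  obtain ⟨γ, hγ, hw⟩ := hw
  refine ⟨g * γ * g⁻¹, mul_mem (mul_mem hg hγ) (inv_mem hg), pact_mem_kulkarniLimit ?_ ?_ hw⟩
  · rintro _ ⟨n, rfl⟩
    exact ⟨n, conj_zpow⟩
  · rintro _ ⟨n, rfl⟩
    refine ⟨n, ?_⟩
    simp only [conj_zpow]
    group

/-- Precomposition with `g : U → g U` carries the restrictions of `Γ` to `g U` onto the
restrictions of `Γ` to `U`, so normality passes from `U` to `g U`. -/
lemma pact_mem_eqSet (hg : g ∈ Γ) {z : P2} (hz : z ∈ eqSet Γ) : pact g z ∈ eqSet Γ := by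
  obtain ⟨U, hU, hzU, hc⟩ := hz
  refine ⟨pactHomeo g '' U, (pactHomeo g).isOpenMap U hU, ⟨z, hzU, rfl⟩, ?_⟩
  let e : C(U, P2) ≃ₜ C(pactHomeo g '' U, P2) :=
    ((pactHomeo g).image U).arrowCongr (Homeomorph.refl P2)
  have he : ∀ γ : PSL3, e ((pactCM γ).restrict U) =
      (pactCM (γ * g⁻¹)).restrict (pactHomeo g '' U) := by
    intro γ
    ext ⟨_, x, hx, rfl⟩
    have h1 : ((pactHomeo g).image U).symm ⟨pactHomeo g x, x, hx, rfl⟩ = ⟨x, hx⟩ := by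
      rw [Homeomorph.symm_apply_eq]
      rfl
    change pact γ (((pactHomeo g).image U).symm ⟨pactHomeo g x, x, hx, rfl⟩ : U) =
      pact (γ * g⁻¹) (pact g x)
    rw [h1, pact_mul, pact_inv_pact]
  have himg : {f : C(pactHomeo g '' U, P2) |
        ∃ γ ∈ Γ, f = (pactCM γ).restrict (pactHomeo g '' U)} =
      e '' {f : C(U, P2) | ∃ γ ∈ Γ, f = (pactCM γ).restrict U} := by
    ext f
    constructor
    · rintro ⟨γ, hγ, rfl⟩
      exact ⟨_, ⟨γ * g, mul_mem hγ hg, rfl⟩, by rw [he, mul_inv_cancel_right]⟩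
    · rintro ⟨_, ⟨γ, hγ, rfl⟩, rfl⟩
      exact ⟨γ * g⁻¹, mul_mem hγ (inv_mem hg), he γ⟩
  rw [himg, ← e.image_closure]
  exact hc.image e.continuous

end Invariance

/-! ### Finite groups, and the four kinds of region -/

lemma kulkarniLimit_eq_empty {Γ : Subgroup PSL3} (hΓ : (Γ : Set PSL3).Finite) :
    kulkarniLimit Γ = ∅ := by
  have hfin : ∀ P : PSL3 → Prop, ¬ {γ | γ ∈ Γ ∧ P γ}.Infinite := fun P hP =>
    hP (hΓ.subset fun γ hγ => hγ.1)
  have hset : ∀ K, setCluster Γ K = ∅ := fun K =>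
    Set.eq_empty_iff_forall_notMem.2 fun w hw => hfin _ (hw Set.univ Filter.univ_mem)
  have horb : ∀ z, orbitCluster Γ z = ∅ := fun z =>
    Set.eq_empty_iff_forall_notMem.2 fun w hw => hfin _ (hw Set.univ Filter.univ_mem)
  simp [kulkarniLimit, L0, L1, L2, hset, horb, hfin]

lemma eqSet_eq_univ {Γ : Subgroup PSL3} (hΓ : (Γ : Set PSL3).Finite) : eqSet Γ = Set.univ := by
  refine Set.eq_univ_of_forall fun z => ⟨Set.univ, isOpen_univ, trivial, ?_⟩
  have hfin : {f : C((Set.univ : Set P2), P2) |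
      ∃ γ ∈ Γ, f = (pactCM γ).restrict Set.univ}.Finite := by
    refine (hΓ.image fun γ => (pactCM γ).restrict Set.univ).subset ?_
    rintro _ ⟨γ, hγ, rfl⟩
    exact ⟨γ, hγ, rfl⟩
  rw [hfin.isClosed.closure_eq]
  exact hfin.isCompact

/-- The sets `Ω` attached to a subgroup `Γ` by the four constructions: equicontinuity set, Kulkarni
region, complement of `C(Γ)`, and maximal regions of proper discontinuity. -/
def IsRegion (Γ : Subgroup PSL3) (Ω : Set P2) : Prop :=
  Ω = eqSet Γ ∨ Ω = kulkarniRegion Γ ∨ Ω = (CSet Γ)ᶜ ∨ MaxDisc Γ Ω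

lemma IsRegion.eq_univ {Γ : Subgroup PSL3} {Ω : Set P2} (hΩ : IsRegion Γ Ω)
    (hΓ : (Γ : Set PSL3).Finite) : Ω = Set.univ := by
  rcases hΩ with rfl | rfl | rfl | hΩ
  · exact eqSet_eq_univ hΓ
  · rw [kulkarniRegion, kulkarniLimit_eq_empty hΓ, Set.compl_empty]
  · have hcyc : ∀ γ ∈ Γ, kulkarniLimit (Subgroup.zpowers γ) = ∅ := fun γ hγ =>
      kulkarniLimit_eq_empty (hΓ.subset ((Subgroup.zpowers_le).2 hγ))
    have hU : (⋃ γ ∈ Γ, kulkarniLimit (Subgroup.zpowers γ)) = ∅ := by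
      simpa only [Set.iUnion_eq_empty] using hcyc
    rw [CSet, hU, closure_empty, Set.compl_empty]
  · refine (hΩ.2 Set.univ ⟨hΩ.1.1.mono (Set.subset_univ _), isOpen_univ, fun γ _ => ?_,
      fun K _ _ => hΓ.subset fun γ hγ => hγ.1⟩ (Set.subset_univ _)).symm
    exact Set.image_univ_of_surjective (pactHomeo γ).surjective

lemma IsRegion.pact_mem_compl {Γ : Subgroup PSL3} {Ω : Set P2} (hΩ : IsRegion Γ Ω) {g : PSL3}
    (hg : g ∈ Γ) {z : P2} (hz : z ∈ Ωᶜ) : pact g z ∈ Ωᶜ := by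
  rcases hΩ with rfl | rfl | rfl | hΩ
  · intro hgz
    exact hz (by simpa only [pact_inv_pact] using pact_mem_eqSet (inv_mem hg) hgz)
  · rw [kulkarniRegion, compl_compl] at hz ⊢
    exact pact_mem_kulkarniLimit (fun γ hγ => mul_mem (mul_mem hg hγ) (inv_mem hg))
      (fun γ hγ => mul_mem (mul_mem (inv_mem hg) hγ) (inv_mem (inv_mem hg))) hz
  · rw [compl_compl] at hz ⊢
    exact pact_mem_CSet hg hz
  · intro hgz
    refine hz ?_
    rw [← hΩ.1.2.2.1 g⁻¹ (inv_mem hg)]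
    exact ⟨_, hgz, pact_inv_pact g z⟩

/-! ### Counting lines -/

lemma exists_four_lines {Ω : Set P2} (h4 : 4 ≤ LiG Ω) :
    ∃ ℓ : Fin 4 → Set P2, (∀ i, ℓ i ∈ linesIn Ωᶜ) ∧
      ∀ i j k, i ≠ j → i ≠ k → j ≠ k → ∀ p, p ∈ ℓ i → p ∈ ℓ j → p ∉ ℓ k := by
  obtain ⟨L, hL, hcard⟩ : ∃ L ∈ genFamilies Ω, 4 ≤ L.encard := by
    by_contra! hlt
    have h3 : LiG Ω ≤ 3 := iSup₂_le fun L hL => by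
      have h1 : L.encard < 3 + 1 := by
        have := hlt L hL
        norm_num
        exact this
      exact Order.le_of_lt_add_one h1
    exact absurd (h4.trans h3) (by norm_num)
  obtain ⟨T, hTL, hT⟩ := Set.exists_subset_encard_eq hcard
  have hTfin : T.Finite := Set.finite_of_encard_eq_coe (k := 4) hT
  have : Fintype T := hTfin.fintype
  have hTc : Fintype.card T = 4 := by
    have h1 : (Fintype.card T : ℕ∞) = 4 := by
      rw [← hT, Set.encard, ENat.card_eq_coe_fintype_card]
    exact_mod_cast h1
  let e : Fin 4 ≃ T := (Fintype.equivFinOfCardEq hTc).symm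
  have hinj : ∀ i j, (e i : Set P2) = e j → i = j := fun i j h => e.injective (Subtype.ext h)
  refine ⟨fun i => e i, fun i => hL.1 _ (hTL (e i).2), ?_⟩
  intro i j k hij hik hjk p hi hj hk
  rcases hL.2 p _ (hTL (e i).2) _ (hTL (e j).2) _ (hTL (e k).2) hi hj hk with h | h | h
  · exact hij (hinj _ _ h)
  · exact hik (hinj _ _ h)
  · exact hjk (hinj _ _ h)

theorem infinitely_many_lines_of_liG_ge_four
    (Γ : Subgroup PSL3) (hΓ : DiscreteTopology ↥Γ) (Ω : Set P2)
    (hΩ : Ω = eqSet Γ ∨ Ω = kulkarniRegion Γ ∨ Ω = (CSet Γ)ᶜ ∨ MaxDisc Γ Ω)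
    (h4 : 4 ≤ LiG Ω) :
    (linesIn Ωᶜ).Infinite := by
  intro hfin
  have hR : IsRegion Γ Ω := hΩ
  obtain ⟨ℓ, hℓ, hgen⟩ := exists_four_lines h4
  have hmem : ∀ γ ∈ Γ, ∀ i, pact γ '' ℓ i ∈ linesIn Ωᶜ := fun γ hγ i =>
    ⟨(hℓ i).1.pact_image γ, by
      rintro _ ⟨z, hz, rfl⟩
      exact hR.pact_mem_compl hγ ((hℓ i).2 hz)⟩
  have : Finite (linesIn Ωᶜ) := hfin
  let φ : Γ → Fin 4 → linesIn Ωᶜ := fun γ i => ⟨pact γ '' ℓ i, hmem γ γ.2 i⟩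
  have hφ : Function.Injective φ := by
    intro γ δ hγδ
    have him : ∀ i, pact (γ : PSL3) '' ℓ i = pact (δ : PSL3) '' ℓ i := fun i =>
      congrArg Subtype.val (congrFun hγδ i)
    have h1 : (δ : PSL3)⁻¹ * γ = 1 := by
      refine eq_one_of_fixes_four _ ℓ (fun i => (hℓ i).1) hgen fun i => ?_
      have hcomp : pact ((δ : PSL3)⁻¹ * γ) = pact (δ : PSL3)⁻¹ ∘ pact (γ : PSL3) :=
        funext fun x => pact_mul _ _ x
      rw [hcomp, Set.image_comp, him i, ← Set.image_comp]
      have hid : pact (δ : PSL3)⁻¹ ∘ pact (δ : PSL3) = id := funext fun x => pact_inv_pact _ x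
      rw [hid, Set.image_id]
    exact Subtype.ext (inv_mul_eq_one.1 h1).symm
  have hΓfin : (Γ : Set PSL3).Finite := Finite.of_injective φ hφ
  obtain ⟨z, hz⟩ := (hℓ 0).1.nonempty
  refine (hℓ 0).2 hz ?_
  rw [hR.eq_univ hΓfin]
  trivial
end
end
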